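/- arXiv:2112.13902 — 3 statements merged into one kernel-verified Lean document; each statement's English description precedes it below -/
import Mathlib

section
/- There exists a universal constant C > 0 such that the following holds. Let n ≥ 1, d ≥ 1, let P be a polynomial of degree at most d on {-1,1}^n, let X be uniformly distributed on {-1,1}^n, and for r > 0 let a_r be an e^{-r}-quantile of P(X). Then for all real r ≥ 1, a_{r+1} - a_r ≤ C^d · (r/d + 1)^{d/2 - 1} · (E|P(X)|^2)^{1/2}. -/
open Classical

/-- Expectation with respect to the uniform measure on the discrete cube `{-1,1}^n`,
encoded as `Fin n → Bool` (`true ↦ 1`, `false ↦ -1`). -/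
noncomputable def cubeE (n : ℕ) (f : (Fin n → Bool) → ℝ) : ℝ :=
  (∑ x : Fin n → Bool, f x) / 2 ^ n

/-- The real value of a coordinate of the cube: `true ↦ 1`, `false ↦ -1`. -/
def cubeSign (b : Bool) : ℝ := if b then 1 else -1

/-- `P` is (the restriction to the cube of) a multilinear polynomial of degree at most `d`:
`P x = ∑_{#S ≤ d} a_S ∏_{i ∈ S} x_i`. -/
def IsPolyDeg (n d : ℕ) (P : (Fin n → Bool) → ℝ) : Prop :=
  ∃ a : Finset (Fin n) → ℝ,
    (∀ S : Finset (Fin n), d < S.card → a S = 0) ∧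
    ∀ x, P x = ∑ S : Finset (Fin n), a S * ∏ i ∈ S, cubeSign (x i)

/-- Probability (uniform measure) of a set of points of the cube. -/
noncomputable def cubePr (n : ℕ) (A : Set (Fin n → Bool)) : ℝ :=
  (∑ x : Fin n → Bool, if x ∈ A then (1 : ℝ) else 0) / 2 ^ n

/-- `a` is an `e^{-r}`-quantile of `P(X)`:
`ℙ(P(X) ≥ a) ≥ e^{-r}` and `ℙ(P(X) ≤ a) ≥ 1 - e^{-r}`. -/
def IsQuantile (n : ℕ) (P : (Fin n → Bool) → ℝ) (r a : ℝ) : Prop :=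
  Real.exp (-r) ≤ cubePr n {x | a ≤ P x} ∧ 1 - Real.exp (-r) ≤ cubePr n {x | P x ≤ a}

/-- Discrete partial derivative: `∂_i f(x) = (f(T_i^1 x) - f(T_i^{-1} x))/2`. -/
noncomputable def discDeriv (n : ℕ) (f : (Fin n → Bool) → ℝ) (i : Fin n)
    (x : Fin n → Bool) : ℝ :=
  (f (Function.update x i true) - f (Function.update x i false)) / 2

/-- Squared norm of the discrete gradient: `|∇f(x)|² = ∑_i |∂_i f(x)|²`. -/
noncomputable def gradSq (n : ℕ) (f : (Fin n → Bool) → ℝ) (x : Fin n → Bool) : ℝ :=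
  ∑ i : Fin n, (discDeriv n f i x) ^ 2


theorem cE_add (n : ℕ) (f g : (Fin n → Bool) → ℝ) :
    cubeE n (fun x => f x + g x) = cubeE n f + cubeE n g := by
  unfold cubeE; rw [Finset.sum_add_distrib, add_div]

theorem cE_sub (n : ℕ) (f g : (Fin n → Bool) → ℝ) :
    cubeE n (fun x => f x - g x) = cubeE n f - cubeE n g := by
  unfold cubeE; rw [Finset.sum_sub_distrib, sub_div]

theorem cE_mul (n : ℕ) (c : ℝ) (f : (Fin n → Bool) → ℝ) :
    cubeE n (fun x => c * f x) = c * cubeE n f := by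
  unfold cubeE; rw [← Finset.mul_sum, mul_div_assoc]

theorem cE_const (n : ℕ) (c : ℝ) : cubeE n (fun _ => c) = c := by
  unfold cubeE; simp

theorem cE_sum (n : ℕ) {ι : Type} (s : Finset ι) (f : ι → (Fin n → Bool) → ℝ) :
    cubeE n (fun x => ∑ i ∈ s, f i x) = ∑ i ∈ s, cubeE n (f i) := by
  unfold cubeE; rw [Finset.sum_comm, Finset.sum_div]

theorem cE_mono (n : ℕ) {f g : (Fin n → Bool) → ℝ} (h : ∀ x, f x ≤ g x) :
    cubeE n f ≤ cubeE n g := by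
  unfold cubeE
  have := Finset.sum_le_sum (fun x (_ : x ∈ Finset.univ) => h x)
  gcongr

theorem cE_nonneg (n : ℕ) {f : (Fin n → Bool) → ℝ} (h : ∀ x, 0 ≤ f x) :
    0 ≤ cubeE n f := by
  rw [← cE_const n 0]; exact cE_mono n h

theorem cE_pr (n : ℕ) (A : Set (Fin n → Bool)) :
    cubePr n A = cubeE n (fun x => if x ∈ A then (1:ℝ) else 0) := rfl

theorem cE_cs (n : ℕ) (f g : (Fin n → Bool) → ℝ) :
    (cubeE n (fun x => f x * g x)) ^ 2 ≤
      cubeE n (fun x => f x ^ 2) * cubeE n (fun x => g x ^ 2) := by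
  unfold cubeE
  rw [div_pow, div_mul_div_comm, ← sq]
  have := Finset.sum_mul_sq_le_sq_mul_sq Finset.univ f g
  gcongr

theorem cE_pos (n : ℕ) {f : (Fin n → Bool) → ℝ} (h : ∀ x, 0 ≤ f x) (h0 : cubeE n f = 0) :
    ∀ x, f x = 0 := by
  unfold cubeE at h0
  have h1 : ∑ x, f x = 0 := by
    rcases div_eq_zero_iff.1 h0 with h | h
    · exact h
    · exact absurd h (by positivity)
  intro x
  exact (Finset.sum_eq_zero_iff_of_nonneg (fun x _ => h x)).1 h1 x (Finset.mem_univ x)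

/-- slices -/
def slT {n : ℕ} (b : Bool) (f : (Fin (n+1) → Bool) → ℝ) : (Fin n → Bool) → ℝ :=
  fun x => f (Fin.cons b x)

theorem cE_succ (n : ℕ) (f : (Fin (n+1) → Bool) → ℝ) :
    cubeE (n+1) f = (cubeE n (slT true f) + cubeE n (slT false f)) / 2 := by
  unfold cubeE slT
  have : ∑ x, f x = ∑ p : Bool × (Fin n → Bool), f (Fin.cons p.1 p.2) :=
    (Fintype.sum_equiv (Fin.consEquiv (fun _ : Fin (n+1) => Bool)) _ _ (fun p => rfl)).symm
  rw [this, Fintype.sum_prod_type, Fintype.sum_bool]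
  field_simp
  ring

theorem dd_zero {n : ℕ} (f : (Fin (n+1) → Bool) → ℝ) (b : Bool) (x : Fin n → Bool) :
    discDeriv (n+1) f 0 (Fin.cons b x) = (slT true f x - slT false f x) / 2 := by
  unfold discDeriv slT
  rw [Fin.update_cons_zero, Fin.update_cons_zero]

theorem dd_succ {n : ℕ} (f : (Fin (n+1) → Bool) → ℝ) (i : Fin n) (b : Bool) (x : Fin n → Bool) :
    discDeriv (n+1) f i.succ (Fin.cons b x) = discDeriv n (slT b f) i x := by
  unfold discDeriv slT
  rw [Fin.cons_update, Fin.cons_update]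

theorem gradSq_cons {n : ℕ} (f : (Fin (n+1) → Bool) → ℝ) (b : Bool) (x : Fin n → Bool) :
    gradSq (n+1) f (Fin.cons b x) =
      ((slT true f x - slT false f x) / 2)^2 + gradSq n (slT b f) x := by
  unfold gradSq
  rw [Fin.sum_univ_succ, dd_zero]
  simp only [dd_succ]

theorem two_pt (a b : ℝ) (ha : 0 ≤ a) (hb : 0 ≤ b) :
    (a * Real.log a + b * Real.log b) / 2 - (a+b)/2 * Real.log ((a+b)/2)
      ≤ (a-b)^2 / (2 * (a+b)) := by
  rcases eq_or_lt_of_le (add_nonneg ha hb) with h | h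
  · have h1 : a = 0 := by linarith
    have h2 : b = 0 := by linarith
    subst h1; subst h2; simp
  have key : ∀ c : ℝ, 0 ≤ c → c * Real.log c ≤ c * Real.log ((a+b)/2) + c * (c / ((a+b)/2) - 1) := by
    intro c hc
    rcases eq_or_lt_of_le hc with h' | h'
    · subst h'; simp
    have := Real.log_le_sub_one_of_pos (x := c / ((a+b)/2)) (by positivity)
    rw [Real.log_div h'.ne' (by positivity)] at this
    nlinarith
  have k1 := key a ha
  have k2 := key b hb
  have : (a * (a / ((a+b)/2) - 1) + b * (b / ((a+b)/2) - 1))/2 = (a-b)^2 / (2 * (a+b)) := by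
    field_simp; ring
  rw [← this]
  linarith

theorem logSob (n : ℕ) : ∀ f : (Fin n → Bool) → ℝ,
    cubeE n (fun x => f x ^ 2 * Real.log (f x ^ 2)) -
      cubeE n (fun x => f x ^ 2) * Real.log (cubeE n (fun x => f x ^ 2)) ≤
    4 * cubeE n (gradSq n f) := by
  induction n with
  | zero =>
    intro f
    have : 0 ≤ cubeE 0 (gradSq 0 f) := cE_nonneg _ (fun x => by simp [gradSq])
    simp only [cubeE] at *
    simp at *
    linarith
  | succ n ih =>
    intro f
    have i1 := ih (slT true f)
    have i0 := ih (slT false f)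
    set f1 := slT true f
    set f0 := slT false f
    set m1 := cubeE n (fun x => f1 x ^ 2)
    set m0 := cubeE n (fun x => f0 x ^ 2)
    have hm1 : 0 ≤ m1 := cE_nonneg _ (fun x => by positivity)
    have hm0 : 0 ≤ m0 := cE_nonneg _ (fun x => by positivity)
    have e1 : cubeE (n+1) (fun x => f x ^ 2) = (m1 + m0)/2 := cE_succ n _
    have e2 : cubeE (n+1) (fun x => f x ^ 2 * Real.log (f x ^ 2)) =
      (cubeE n (fun x => f1 x ^ 2 * Real.log (f1 x ^ 2)) +
        cubeE n (fun x => f0 x ^ 2 * Real.log (f0 x ^ 2)))/2 := cE_succ n _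
    have e3 : cubeE (n+1) (gradSq (n+1) f) = cubeE n (fun x => (f1 x - f0 x)^2) / 4 +
        (cubeE n (gradSq n f1) + cubeE n (gradSq n f0))/2 := by
      rw [cE_succ]
      have : ∀ b, cubeE n (slT b (gradSq (n+1) f)) =
          cubeE n (fun x => (f1 x - f0 x)^2) / 4 + cubeE n (gradSq n (slT b f)) := by
        intro b
        have h : slT b (gradSq (n+1) f) =
            fun x => (1/4) * (f1 x - f0 x)^2 + gradSq n (slT b f) x := by
          funext x
          show gradSq (n+1) f (Fin.cons b x) = _
          rw [gradSq_cons]; ring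
        rw [h, cE_add, cE_mul]; ring
      rw [this, this]; ring
    have tp := two_pt m1 m0 hm1 hm0
    have cs : (m1 - m0)^2 / (2*(m1+m0)) ≤ cubeE n (fun x => (f1 x - f0 x)^2) := by
      apply div_le_of_le_mul₀ (by positivity) (cE_nonneg _ (fun x => by positivity))
      have h := cE_cs n (fun x => f1 x - f0 x) (fun x => f1 x + f0 x)
      have h1 : cubeE n (fun x => (f1 x - f0 x) * (f1 x + f0 x)) = m1 - m0 := by
        rw [← cE_sub]; congr 1; funext x; ring
      have h2 : cubeE n (fun x => (f1 x + f0 x)^2) ≤ 2 * (m1 + m0) := by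
        rw [← cE_add, ← cE_mul]
        apply cE_mono; intro x; nlinarith [sq_nonneg (f1 x - f0 x)]
      rw [h1] at h
      exact h.trans (mul_le_mul_of_nonneg_left h2 (cE_nonneg _ (fun x => by positivity)))
    rw [e1, e2, e3]
    linarith

/-- entropy lower bound + log-Sobolev for functions supported on a small set -/
theorem faberKrahn (n : ℕ) (g : (Fin n → Bool) → ℝ) (r : ℝ) (A : Set (Fin n → Bool))
    (hA : cubePr n A ≤ Real.exp (-r)) (hg : ∀ x, x ∉ A → g x = 0) :
    r * cubeE n (fun x => g x ^ 2) ≤ 4 * cubeE n (gradSq n g) := by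
  refine le_trans ?_ (logSob n g)
  set μ := cubeE n (fun x => g x ^ 2) with hμ
  have hμ0 : 0 ≤ μ := cE_nonneg _ (fun x => by positivity)
  rcases eq_or_lt_of_le hμ0 with h | h
  · have hz := cE_pos n (f := fun x => g x ^ 2) (fun x => by positivity) (hμ.symm.trans h.symm)
    rw [← h]
    simp [hz, cE_const]
  have pt : ∀ x, g x ^ 2 - μ * Real.exp r * (if x ∈ A then (1:ℝ) else 0) ≤
      g x ^ 2 * Real.log (g x ^ 2) - (Real.log μ + r) * g x ^ 2 := by
    intro x
    by_cases hx : x ∈ A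
    · rw [if_pos hx]
      rcases eq_or_lt_of_le (sq_nonneg (g x)) with h' | h'
      · rw [← h']; simp; positivity
      have := Real.log_le_sub_one_of_pos (x := μ * Real.exp r / g x ^ 2) (by positivity)
      rw [Real.log_div (by positivity) h'.ne', Real.log_mul h.ne' (by positivity), Real.log_exp] at this
      have h2 := mul_le_mul_of_nonneg_left this h'.le
      have h3 : g x ^ 2 * (μ * Real.exp r / g x ^ 2 - 1) = μ * Real.exp r - g x ^ 2 := by
        rw [mul_sub, mul_div_cancel₀ _ h'.ne', mul_one]
      rw [h3] at h2
      linarith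
    · rw [if_neg hx, hg x hx]; simp
  have := cE_mono n pt
  rw [cE_sub, cE_sub, cE_mul, cE_mul, ← cE_pr, ← hμ] at this
  have h4 : μ * Real.exp r * cubePr n A ≤ μ := by
    calc _ ≤ μ * Real.exp r * Real.exp (-r) := by gcongr
      _ = μ := by rw [mul_assoc, ← Real.exp_add]; simp
  linarith

/-- even part in the first coordinate -/
noncomputable def evP {n : ℕ} (f : (Fin (n+1) → Bool) → ℝ) : (Fin n → Bool) → ℝ :=
  fun x => (slT true f x + slT false f x) / 2

/-- odd part in the first coordinate -/
noncomputable def odP {n : ℕ} (f : (Fin (n+1) → Bool) → ℝ) : (Fin n → Bool) → ℝ :=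
  fun x => (slT true f x - slT false f x) / 2

/-- recursive degree predicate -/
def RDeg : (n : ℕ) → ℕ → ((Fin n → Bool) → ℝ) → Prop
  | 0, _, _ => True
  | n+1, 0, f => RDeg n 0 (evP f) ∧ odP f = fun _ => 0
  | n+1, d+1, f => RDeg n (d+1) (evP f) ∧ RDeg n d (odP f)

theorem RDeg_zero : ∀ (n d : ℕ), RDeg n d (fun _ => 0)
  | 0, _ => trivial
  | n+1, 0 => by
      have h1 : evP (n := n) (fun _ => 0) = fun _ => 0 := by funext x; simp [evP, slT]
      have h2 : odP (n := n) (fun _ => 0) = fun _ => 0 := by funext x; simp [odP, slT]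
      exact ⟨by rw [h1]; exact RDeg_zero n 0, h2⟩
  | n+1, d+1 => by
      have h1 : evP (n := n) (fun _ => 0) = fun _ => 0 := by funext x; simp [evP, slT]
      have h2 : odP (n := n) (fun _ => 0) = fun _ => 0 := by funext x; simp [odP, slT]
      exact ⟨by rw [h1]; exact RDeg_zero n _, by rw [h2]; exact RDeg_zero n d⟩

theorem RDeg_add : ∀ (n d : ℕ) (f g : (Fin n → Bool) → ℝ), RDeg n d f → RDeg n d g →
    RDeg n d (fun x => f x + g x)
  | 0, _, _, _ => fun _ _ => trivial
  | n+1, d, f, g => by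
      have h1 : evP (fun x => f x + g x) = fun x => evP f x + evP g x := by
        funext x; simp [evP, slT]; ring
      have h2 : odP (fun x => f x + g x) = fun x => odP f x + odP g x := by
        funext x; simp [odP, slT]; ring
      cases d with
      | zero =>
        rintro ⟨a, b⟩ ⟨a', b'⟩
        exact ⟨by rw [h1]; exact RDeg_add n 0 _ _ a a', by rw [h2, b, b']; simp⟩
      | succ d =>
        rintro ⟨a, b⟩ ⟨a', b'⟩
        exact ⟨by rw [h1]; exact RDeg_add n _ _ _ a a', by rw [h2]; exact RDeg_add n d _ _ b b'⟩

theorem RDeg_smul : ∀ (n d : ℕ) (c : ℝ) (f : (Fin n → Bool) → ℝ), RDeg n d f →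
    RDeg n d (fun x => c * f x)
  | 0, _, _, _ => fun _ => trivial
  | n+1, d, c, f => by
      have h1 : evP (fun x => c * f x) = fun x => c * evP f x := by
        funext x; simp [evP, slT]; ring
      have h2 : odP (fun x => c * f x) = fun x => c * odP f x := by
        funext x; simp [odP, slT]; ring
      cases d with
      | zero =>
        rintro ⟨a, b⟩
        exact ⟨by rw [h1]; exact RDeg_smul n 0 _ _ a, by rw [h2, b]; simp⟩
      | succ d =>
        rintro ⟨a, b⟩
        exact ⟨by rw [h1]; exact RDeg_smul n _ _ _ a, by rw [h2]; exact RDeg_smul n d _ _ b⟩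

theorem RDeg_sum (n d : ℕ) {ι : Type} (s : Finset ι) (f : ι → (Fin n → Bool) → ℝ)
    (h : ∀ i, RDeg n d (f i)) : RDeg n d (fun x => ∑ i ∈ s, f i x) := by
  induction s using Finset.induction_on with
  | empty => simpa using RDeg_zero n d
  | insert a s ha ih =>
    simp only [Finset.sum_insert ha]
    exact RDeg_add n d _ _ (h a) ih

/-- monomial, indexed by a boolean vector -/
noncomputable def mono {n : ℕ} (S : Fin n → Prop) (x : Fin n → Bool) : ℝ :=
  ∏ i, if S i then cubeSign (x i) else 1

theorem RDeg_mono : ∀ (n d : ℕ) (S : Fin n → Prop),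
    (∑ i, if S i then 1 else 0) ≤ d → RDeg n d (mono S)
  | 0, _, _ => fun _ => trivial
  | n+1, d, S => by
      intro h
      rw [Fin.sum_univ_succ] at h
      have hs : ∀ b, slT b (mono S) =
          fun x => (if S 0 then cubeSign b else 1) * mono (fun i => S i.succ) x := by
        intro b; funext x
        simp only [slT, mono, Fin.prod_univ_succ, Fin.cons_zero, Fin.cons_succ]
      by_cases h0 : S 0
      · have h1 : evP (mono S) = fun _ => 0 := by
          funext x; simp only [evP, hs]; simp [h0, cubeSign]
        have h2 : odP (mono S) = mono (fun i => S i.succ) := by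
          funext x; simp only [odP, hs]; simp [h0, cubeSign]
        simp only [h0, if_true] at h
        cases d with
        | zero => omega
        | succ d =>
          exact ⟨by rw [h1]; exact RDeg_zero _ _,
            by rw [h2]; exact RDeg_mono n d _ (by omega)⟩
      · have h1 : evP (mono S) = mono (fun i => S i.succ) := by
          funext x; simp only [evP, hs]; simp [h0]
        have h2 : odP (mono S) = fun _ => 0 := by
          funext x; simp only [odP, hs]; simp [h0]
        simp only [h0, if_false, zero_add] at h
        cases d with
        | zero => exact ⟨by rw [h1]; exact RDeg_mono n 0 _ h, h2⟩
        | succ d =>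
          exact ⟨by rw [h1]; exact RDeg_mono n _ _ h, by rw [h2]; exact RDeg_zero _ _⟩

theorem RDeg_of_poly (n d : ℕ) (P : (Fin n → Bool) → ℝ) (h : IsPolyDeg n d P) : RDeg n d P := by
  obtain ⟨a, ha, hP⟩ := h
  have : P = fun x => ∑ S : Finset (Fin n), a S * ∏ i ∈ S, cubeSign (x i) := funext hP
  rw [this]
  apply RDeg_sum
  intro S
  by_cases hS : d < S.card
  · simp only [ha S hS, zero_mul]; exact RDeg_zero n d
  · apply RDeg_smul
    have hm : (fun x : Fin n → Bool => ∏ i ∈ S, cubeSign (x i)) = mono (fun i => i ∈ S) := by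
      funext x
      unfold mono
      refine Eq.trans (Finset.prod_congr rfl (fun i hi => ?_))
        (Finset.prod_subset (Finset.subset_univ S) (fun i _ hi => if_neg hi))
      exact (if_pos hi).symm
    rw [hm]
    apply RDeg_mono
    refine le_trans (le_of_eq ?_) (not_lt.1 hS)
    rw [Finset.card_eq_sum_ones]
    refine Eq.symm (Eq.trans (Finset.sum_congr rfl (fun i hi => ?_))
      (Finset.sum_subset (Finset.subset_univ S) (fun i _ hi => if_neg hi)))
    exact (if_pos hi).symm

theorem sl_ev_od {n : ℕ} (f : (Fin (n+1) → Bool) → ℝ) (x) :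
    slT true f x = evP f x + odP f x ∧ slT false f x = evP f x - odP f x := by
  constructor <;> (unfold evP odP; ring)

theorem ev_dd_succ {n : ℕ} (f : (Fin (n+1) → Bool) → ℝ) (i : Fin n) :
    evP (discDeriv (n+1) f i.succ) = discDeriv n (evP f) i ∧
    odP (discDeriv (n+1) f i.succ) = discDeriv n (odP f) i := by
  constructor <;> funext x
  · show (discDeriv (n+1) f i.succ (Fin.cons true x) + discDeriv (n+1) f i.succ (Fin.cons false x))/2 = _
    rw [dd_succ, dd_succ]; unfold discDeriv evP; ring
  · show (discDeriv (n+1) f i.succ (Fin.cons true x) - discDeriv (n+1) f i.succ (Fin.cons false x))/2 = _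
    rw [dd_succ, dd_succ]; unfold discDeriv odP; ring

theorem ev_dd_zero {n : ℕ} (f : (Fin (n+1) → Bool) → ℝ) :
    evP (discDeriv (n+1) f 0) = odP f ∧
    odP (discDeriv (n+1) f 0) = fun _ => 0 := by
  constructor <;> funext x
  · show (discDeriv (n+1) f 0 (Fin.cons true x) + discDeriv (n+1) f 0 (Fin.cons false x))/2 = _
    rw [dd_zero, dd_zero]; unfold odP; ring
  · show (discDeriv (n+1) f 0 (Fin.cons true x) - discDeriv (n+1) f 0 (Fin.cons false x))/2 = _
    rw [dd_zero, dd_zero]; ring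

theorem dd_const {n : ℕ} (i : Fin n) : discDeriv n (fun _ => 0) i = fun _ => 0 := by
  funext x; simp [discDeriv]

theorem RDeg_up : ∀ (n d : ℕ) (f : (Fin n → Bool) → ℝ), RDeg n d f → RDeg n (d+1) f
  | 0, _, _, _ => trivial
  | n+1, 0, f, h => ⟨RDeg_up n 0 _ h.1, by rw [h.2]; exact RDeg_zero _ _⟩
  | n+1, d+1, f, h => ⟨RDeg_up n _ _ h.1, RDeg_up n _ _ h.2⟩

theorem dd_deg0 : ∀ (n : ℕ) (f : (Fin n → Bool) → ℝ) (i : Fin n), RDeg n 0 f →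
    discDeriv n f i = fun _ => 0
  | 0, _, i, _ => i.elim0
  | n+1, f, i, h => by
    have key : evP (discDeriv (n+1) f i) = (fun _ => 0) ∧ odP (discDeriv (n+1) f i) = fun _ => 0 := by
      refine Fin.cases ?_ (fun i => ?_) i
      · rw [(ev_dd_zero f).1, (ev_dd_zero f).2, h.2]; exact ⟨rfl, rfl⟩
      · rw [(ev_dd_succ f i).1, (ev_dd_succ f i).2, h.2, dd_const]
        exact ⟨dd_deg0 n _ i h.1, rfl⟩
    funext x
    refine Fin.consCases (fun b x => ?_) x
    have := sl_ev_od (discDeriv (n+1) f i) x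
    rw [key.1, key.2] at this
    cases b
    · simpa [slT] using this.2
    · simpa [slT] using this.1

theorem RDeg_dd : ∀ (n d : ℕ) (f : (Fin n → Bool) → ℝ) (i : Fin n), RDeg n (d+1) f →
    RDeg n d (discDeriv n f i)
  | 0, _, _, i, _ => i.elim0
  | n+1, d, f, i, h => by
    refine Fin.cases ?_ (fun i => ?_) i
    · have e := ev_dd_zero f
      cases d with
      | zero => exact ⟨by rw [e.1]; exact h.2, e.2⟩
      | succ d => exact ⟨by rw [e.1]; exact h.2, by rw [e.2]; exact RDeg_zero _ _⟩
    · have e := ev_dd_succ f i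
      cases d with
      | zero => exact ⟨by rw [e.1]; exact RDeg_dd n 0 _ i h.1, by rw [e.2]; exact dd_deg0 n _ i h.2⟩
      | succ d => exact ⟨by rw [e.1]; exact RDeg_dd n _ _ i h.1, by rw [e.2]; exact RDeg_dd n d _ i h.2⟩

theorem cE_sq_succ {n : ℕ} (f : (Fin (n+1) → Bool) → ℝ) :
    cubeE (n+1) (fun x => f x ^ 2) = cubeE n (fun x => evP f x ^ 2) + cubeE n (fun x => odP f x ^ 2) := by
  rw [cE_succ, ← cE_add, ← cE_add]
  have : (fun x => slT true (fun x => f x ^ 2) x + slT false (fun x => f x ^ 2) x) =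
      fun x => 2 * (evP f x ^ 2 + odP f x ^ 2) := by
    funext x; simp only [evP, odP, slT]; ring
  rw [this, cE_mul]; ring

/-- Poincare-type reverse inequality -/
theorem grad_le (n : ℕ) : ∀ (d : ℕ) (f : (Fin n → Bool) → ℝ), RDeg n d f →
    ∑ i, cubeE n (fun x => discDeriv n f i x ^ 2) ≤ d * cubeE n (fun x => f x ^ 2) := by
  induction n with
  | zero =>
    intro d f _
    simp only [Finset.univ_eq_empty, Finset.sum_empty]
    exact mul_nonneg (by positivity) (cE_nonneg _ (fun x => by positivity))
  | succ n ih =>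
    intro d f h
    rw [Fin.sum_univ_succ]
    simp only [cE_sq_succ, (ev_dd_zero f).1, (ev_dd_zero f).2, (ev_dd_succ f _).1,
      (ev_dd_succ f _).2, Finset.sum_add_distrib]
    have hb : 0 ≤ cubeE n (fun x => odP f x ^ 2) := cE_nonneg _ (fun x => by positivity)
    cases d with
    | zero =>
      have i1 := ih 0 _ h.1
      simp only [h.2, dd_const]
      simp [cE_const] at *
      exact i1
    | succ d =>
      have i1 := ih _ _ h.1
      have i2 := ih _ _ h.2
      simp only [ne_eq, OfNat.ofNat_ne_zero, not_false_eq_true, zero_pow, cE_const]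
      push_cast at *
      linarith

theorem cheb (p q : ℝ) (hp : 0 ≤ p) (hq : 0 ≤ q) (k : ℕ) :
    (p + q) * (p^k + q^k) ≤ 2 * (p^(k+1) + q^(k+1)) := by
  have : 0 ≤ (p - q) * (p^k - q^k) := by
    rcases le_total p q with h | h
    · exact mul_nonneg_of_nonpos_of_nonpos (by linarith)
        (sub_nonpos.2 (pow_le_pow_left₀ hp h k))
    · exact mul_nonneg (by linarith) (sub_nonneg.2 (pow_le_pow_left₀ hq h k))
  rw [pow_succ, pow_succ]; nlinarith

theorem Yk (p q : ℝ) (hp : 0 ≤ p) (hq : 0 ≤ q) (k : ℕ) :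
    (p - q) * (p^k - q^k) * (p + q) ≤ k * (p-q)^2 * (p^k + q^k) := by
  induction k with
  | zero => simp
  | succ k ih =>
    have c := cheb p q hp hq k
    have h1 : (p - q) * (p^(k+1) - q^(k+1)) * (p + q) =
      (p+q)/2 * ((p - q) * (p^k - q^k) * (p + q)) + (p-q)^2/2 * ((p + q) * (p^k + q^k)) := by
      rw [pow_succ, pow_succ]; ring
    have h2 := mul_le_mul_of_nonneg_left ih (show 0 ≤ (p+q)/2 by positivity)
    have h3 := mul_le_mul_of_nonneg_left c (show 0 ≤ (k+1) * (p-q)^2/2 by positivity)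
    rw [h1]
    push_cast
    nlinarith

theorem Zk (u v : ℝ) (k : ℕ) :
    (u^2 - v^2) * ((u^2)^k - (v^2)^k) ≤ 2 * k * (u-v)^2 * ((u^2)^k + (v^2)^k) := by
  rcases eq_or_lt_of_le (show 0 ≤ u^2 + v^2 by positivity) with h | h
  · have h1 : u^2 = 0 := by nlinarith [sq_nonneg u, sq_nonneg v]
    have h2 : v^2 = 0 := by nlinarith [sq_nonneg u, sq_nonneg v]
    rw [h1, h2]; simp; positivity
  refine le_of_mul_le_mul_right ?_ h
  refine (Yk (u^2) (v^2) (by positivity) (by positivity) k).trans ?_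
  have h1 : (u^2 - v^2)^2 ≤ 2 * (u-v)^2 * (u^2+v^2) := by
    nlinarith [mul_nonneg (sq_nonneg (u-v)) (sq_nonneg (u-v))]
  have h2 := mul_le_mul_of_nonneg_left h1 (show 0 ≤ k * ((u^2)^k + (v^2)^k) by positivity)
  nlinarith

theorem twoPoint (A B M : ℝ) (k : ℕ) (hM : 4 * (k:ℝ) ≤ M) :
    (((A+B)^2)^k + ((A-B)^2)^k)/2 ≤ (A^2 + M * B^2)^k := by
  have hM0 : 0 ≤ M := le_trans (by positivity) hM
  induction k with
  | zero => simp
  | succ k ih =>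
    push_cast at hM
    have i := ih (by linarith)
    have z := Zk (A+B) (A-B) k
    rw [pow_succ (A^2 + M * B^2)]
    refine le_trans ?_ (mul_le_mul_of_nonneg_right i (by positivity))
    rw [pow_succ ((A+B)^2) k, pow_succ ((A-B)^2) k]
    set s := ((A+B)^2)^k
    set t := ((A-B)^2)^k
    have hs : 0 ≤ s := by positivity
    have ht : 0 ≤ t := by positivity
    have : (4 * k + 1) * B^2 * (s+t) ≤ M * B^2 * (s + t) := by
      have : (4 * k + 1 : ℝ) ≤ M := by linarith
      gcongr
    nlinarith

theorem mink (n k : ℕ) (hk : 1 ≤ k) (u v : (Fin n → Bool) → ℝ) (hu : ∀ x, 0 ≤ u x) (hv : ∀ x, 0 ≤ v x)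
    (a b : ℝ) (ha : 0 ≤ a) (hb : 0 ≤ b) (h1 : cubeE n (fun x => u x ^ k) ≤ a^k)
    (h2 : cubeE n (fun x => v x ^ k) ≤ b^k) : cubeE n (fun x => (u x + v x)^k) ≤ (a+b)^k := by
  have zero : ∀ w : (Fin n → Bool) → ℝ, (∀ x, 0 ≤ w x) → cubeE n (fun x => w x ^ k) ≤ 0 ^ k →
      ∀ x, w x = 0 := by
    intro w hw h x
    rw [zero_pow (by omega)] at h
    have := cE_pos n (f := fun x => w x ^ k) (fun x => pow_nonneg (hw x) k)
      (le_antisymm h (cE_nonneg n fun x => pow_nonneg (hw x) k)) x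
    exact pow_eq_zero_iff (by omega) |>.1 this
  rcases eq_or_lt_of_le ha with rfl | ha
  · simp only [zero u hu h1, zero_add]; exact h2
  rcases eq_or_lt_of_le hb with rfl | hb
  · simp only [zero v hv h2, add_zero]; exact h1
  have pt : ∀ x, (u x + v x)^k ≤
      (a+b)^k * (a/(a+b) / a^k) * u x ^ k + (a+b)^k * (b/(a+b) / b^k) * v x ^ k := by
    intro x
    have := (convexOn_pow (𝕜 := ℝ) k).2
      (show u x / a ∈ Set.Ici (0:ℝ) from div_nonneg (hu x) ha.le)
      (show v x / b ∈ Set.Ici (0:ℝ) from div_nonneg (hv x) hb.le)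
      (show 0 ≤ a/(a+b) by positivity) (show 0 ≤ b/(a+b) by positivity) (by field_simp)
    simp only [smul_eq_mul] at this
    have e : a/(a+b) * (u x / a) + b/(a+b) * (v x / b) = (u x + v x)/(a+b) := by field_simp
    rw [e, div_pow, div_pow, div_pow, div_le_iff₀ (by positivity)] at this
    refine this.trans (le_of_eq ?_)
    ring
  refine (cE_mono n pt).trans ?_
  rw [cE_add, cE_mul, cE_mul]
  calc _ ≤ (a+b)^k * (a/(a+b) / a^k) * a ^ k + (a+b)^k * (b/(a+b) / b^k) * b ^ k := by gcongr
    _ = _ := by field_simp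

theorem hyper (k : ℕ) (hk : 1 ≤ k) (n : ℕ) : ∀ (d : ℕ) (f : (Fin n → Bool) → ℝ), RDeg n d f →
    cubeE n (fun x => (f x ^ 2)^k) ≤ ((4 * (k:ℝ))^d * cubeE n (fun x => f x ^ 2))^k := by
  have hk1 : (1:ℝ) ≤ k := by exact_mod_cast hk
  induction n with
  | zero =>
    intro d f _
    have : (1:ℝ) ≤ (4 * (k:ℝ))^d := one_le_pow₀ (by linarith)
    simp only [cubeE]
    simp only [pow_zero, div_one, Finset.univ_unique, Finset.sum_singleton]
    apply pow_le_pow_left₀ (by positivity)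
    nlinarith [sq_nonneg (f default)]
  | succ n ih =>
    intro d f h
    have e : cubeE (n+1) (fun x => (f x ^ 2)^k) ≤
        cubeE n (fun x => (evP f x ^ 2 + (4 * (k:ℝ)) * odP f x ^ 2)^k) := by
      rw [cE_succ, ← cE_add, div_eq_inv_mul, ← cE_mul]
      apply cE_mono
      intro x
      have t := twoPoint (evP f x) (odP f x) (4 * k) k le_rfl
      rw [← (sl_ev_od f x).1, ← (sl_ev_od f x).2] at t
      refine le_trans (le_of_eq ?_) t
      simp only [slT]; ring
    refine e.trans ?_
    rw [cE_sq_succ, mul_add]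
    have hA : 0 ≤ cubeE n (fun x => evP f x ^ 2) := cE_nonneg _ (fun x => by positivity)
    have hB : 0 ≤ cubeE n (fun x => odP f x ^ 2) := cE_nonneg _ (fun x => by positivity)
    apply mink n k hk _ _ (fun x => by positivity) (fun x => by positivity) _ _
      (by positivity) (by positivity)
    · cases d with
      | zero => exact ih _ _ h.1
      | succ d => exact ih _ _ h.1
    · cases d with
      | zero =>
        rw [h.2]; simp [cE_const, zero_pow (show k ≠ 0 by omega)]
      | succ d =>
        have := ih _ _ h.2
        simp only [mul_pow (4 * (k:ℝ)) _ k]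
        rw [cE_mul, pow_succ', mul_assoc, mul_pow (4 * (k:ℝ)) _ k]
        gcongr

theorem restr (n d k : ℕ) (hk : 1 ≤ k) (Q : (Fin n → Bool) → ℝ) (hQ : RDeg n d Q) (r : ℝ)
    (c : ℝ) (hc : r ≤ c * k) (A : Set (Fin n → Bool)) (hA : cubePr n A ≤ Real.exp (-r)) :
    cubeE n (fun x => (if x ∈ A then (1:ℝ) else 0) * Q x ^ 2) ≤
      2 * Real.exp c * Real.exp (-r) * (4 * (k:ℝ))^d * cubeE n (fun x => Q x ^ 2) := by
  have hk1 : (1:ℝ) ≤ k := by exact_mod_cast hk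
  have h := hyper k hk n d Q hQ
  set m := cubeE n (fun x => Q x ^ 2) with hm
  have hm0 : 0 ≤ m := cE_nonneg _ (fun x => by positivity)
  rcases eq_or_lt_of_le hm0 with h0 | h0
  · have hz := cE_pos n (f := fun x => Q x ^ 2) (fun x => by positivity) (hm.symm.trans h0.symm)
    rw [← h0]
    simp only [hz]
    simp [cE_const]
  set s := (4 * (k:ℝ))^d * m with hs
  have hs0 : 0 < s := by positivity
  set T := Real.exp c * s with hT
  have hT0 : 0 < T := by positivity
  have pt : ∀ x, (if x ∈ A then (1:ℝ) else 0) * Q x ^ 2 ≤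
      T * (if x ∈ A then (1:ℝ) else 0) + (T / T^k) * (Q x ^ 2)^k := by
    intro x
    by_cases hx : x ∈ A
    · simp only [if_pos hx, one_mul, mul_one]
      have : Q x ^ 2 / T ≤ 1 + (Q x ^ 2 / T)^k := by
        rcases le_total (Q x ^ 2 / T) 1 with h1 | h1
        · have : 0 ≤ (Q x ^ 2 / T)^k := by positivity
          linarith
        · have := le_self_pow₀ h1 (show k ≠ 0 by omega)
          linarith
      rw [div_le_iff₀ hT0, div_pow] at this
      refine this.trans (le_of_eq ?_)
      ring
    · simp only [if_neg hx]; simp; positivity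
  refine (cE_mono n pt).trans ?_
  rw [cE_add, cE_mul, cE_mul, ← cE_pr]
  have h3 : T / T^k * cubeE n (fun x => (Q x ^ 2)^k) ≤ T * Real.exp (-r) := by
    calc _ ≤ T / T^k * s^k := by gcongr
      _ = T * Real.exp (-(c * k)) := by
        rw [hT, mul_pow, Real.exp_neg, mul_comm c, Real.exp_nat_mul]; field_simp
      _ ≤ _ := by gcongr
  have h4 : T * cubePr n A ≤ T * Real.exp (-r) := by gcongr
  calc _ ≤ T * Real.exp (-r) + T * Real.exp (-r) := add_le_add h4 h3
    _ = _ := by rw [hT, hs]; ring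

theorem cE_flip (n : ℕ) (i : Fin n) (F : (Fin n → Bool) → ℝ) :
    cubeE n (fun x => F (Function.update x i true) + F (Function.update x i false)) =
      2 * cubeE n F := by
  have inv : Function.Involutive (fun x : Fin n → Bool => Function.update x i (!(x i))) := by
    intro x; simp
  have h1 : cubeE n (fun x => F (Function.update x i (!(x i)))) = cubeE n F := by
    unfold cubeE
    congr 1
    exact Fintype.sum_equiv inv.toPerm _ _ (fun x => rfl)
  have h2 : (fun x => F (Function.update x i true) + F (Function.update x i false)) =
      fun x => F x + F (Function.update x i (!(x i))) := by
    funext x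
    have hx : Function.update x i (x i) = x := Function.update_eq_self i x
    cases h : x i
    · rw [h] at hx; rw [hx]; simp; ring
    · rw [h] at hx; rw [hx]; simp
  rw [h2, cE_add, h1]; ring

/-- truncation -/
noncomputable def trunc (a D p : ℝ) : ℝ := min (max (p - a) 0) D

theorem trunc_sq (a D p q : ℝ) (hD : 0 < D) :
    (trunc a D p - trunc a D q)^2 ≤
      ((if a < p then (1:ℝ) else 0) + (if a < q then (1:ℝ) else 0)) * (p-q)^2 := by
  have lip : |trunc a D p - trunc a D q| ≤ |p - q| := by
    unfold trunc
    refine (abs_min_sub_min_le_max _ _ _ _).trans ?_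
    rw [sub_self, abs_zero, max_eq_left (abs_nonneg _)]
    refine (abs_max_sub_max_le_max _ _ _ _).trans ?_
    rw [sub_self, abs_zero, max_eq_left (abs_nonneg _)]
    simp
  have l2 := sq_le_sq.2 lip
  have z : ∀ y, ¬ a < y → trunc a D y = 0 := by
    intro y hy
    unfold trunc
    rw [max_eq_right (by linarith), min_eq_left hD.le]
  by_cases h1 : a < p
  · rw [if_pos h1]
    have : (0:ℝ) ≤ (if a < q then (1:ℝ) else 0) := by split_ifs <;> norm_num
    nlinarith [sq_nonneg (p-q)]
  · by_cases h2 : a < q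
    · rw [if_neg h1, if_pos h2]; linarith
    · rw [z p h1, z q h2, if_neg h1, if_neg h2]; simp

theorem grad_trunc (n : ℕ) (P : (Fin n → Bool) → ℝ) (a D : ℝ) (hD : 0 < D) (i : Fin n) :
    cubeE n (fun x => discDeriv n (fun x => trunc a D (P x)) i x ^ 2) ≤
      2 * cubeE n (fun x => (if x ∈ {x | a < P x} then (1:ℝ) else 0) * discDeriv n P i x ^ 2) := by
  rw [← cE_flip n i]
  apply cE_mono
  intro x
  have hd : ∀ b, discDeriv n P i (Function.update x i b) = discDeriv n P i x := by
    intro b; simp [discDeriv]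
  rw [hd, hd]
  have t := trunc_sq a D (P (Function.update x i true)) (P (Function.update x i false)) hD
  simp only [Set.mem_ofPred_eq]
  rw [← add_mul]
  unfold discDeriv
  rw [div_pow, div_pow, ← mul_div_assoc]
  gcongr

theorem cPr_compl (n : ℕ) (P : (Fin n → Bool) → ℝ) (a : ℝ) :
    cubePr n {x | a < P x} = 1 - cubePr n {x | P x ≤ a} := by
  rw [cE_pr, cE_pr, ← cE_const n 1, ← cE_sub]
  congr 1
  funext x
  by_cases h : a < P x
  · have h' : ¬ P x ≤ a := not_le.2 h
    simp [h, h', cE_const]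
  · have h' : P x ≤ a := not_lt.1 h
    simp [h, h', cE_const]

theorem main_sq (n d : ℕ) (P : (Fin n → Bool) → ℝ) (hP : RDeg n (d+1) P)
    (r : ℝ) (hr : 1 ≤ r) (a a1 : ℝ) (h : IsQuantile n P r a) (h1 : IsQuantile n P (r+1) a1)
    (hD : a < a1) (k : ℕ) (hk : 1 ≤ k) (hkr : r ≤ ((d:ℝ)+1) * k) :
    r * (a1 - a)^2 ≤ 16 * Real.exp 1 * Real.exp ((d:ℝ)+1) * (4 * (k:ℝ))^d * ((d:ℝ)+1) *
      cubeE n (fun x => P x ^ 2) := by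
  set D := a1 - a with hDd
  have hD0 : 0 < D := by linarith
  set A : Set (Fin n → Bool) := {x | a < P x} with hA
  have hAp : cubePr n A ≤ Real.exp (-r) := by
    rw [hA, cPr_compl]; linarith [h.2]
  set g : (Fin n → Bool) → ℝ := fun x => trunc a D (P x) with hg
  have fk := faberKrahn n g r A hAp (by
    intro x hx
    have : P x ≤ a := not_lt.1 hx
    simp only [hg, trunc]
    rw [max_eq_right (by linarith), min_eq_left hD0.le])
  have lower : D^2 * Real.exp (-(r+1)) ≤ cubeE n (fun x => g x ^ 2) := by
    refine (mul_le_mul_of_nonneg_left h1.1 (sq_nonneg D)).trans ?_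
    rw [cE_pr, ← cE_mul]
    apply cE_mono
    intro x
    by_cases hx : a1 ≤ P x
    · have : g x = D := by
        simp only [hg, trunc]
        rw [max_eq_left (by linarith), min_eq_right (by linarith)]
      rw [this]; simp [hx]
    · simp [hx]; positivity
  have upper : cubeE n (gradSq n g) ≤
      ∑ i, 2 * (2 * Real.exp ((d:ℝ)+1) * Real.exp (-r) * (4 * (k:ℝ))^d *
        cubeE n (fun x => discDeriv n P i x ^ 2)) := by
    have : cubeE n (gradSq n g) = ∑ i, cubeE n (fun x => discDeriv n g i x ^ 2) := by
      rw [← cE_sum]; rfl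
    rw [this]
    apply Finset.sum_le_sum
    intro i _
    refine (grad_trunc n P a D hD0 i).trans ?_
    exact mul_le_mul_of_nonneg_left
      (restr n d k hk _ (RDeg_dd n d P i hP) r _ hkr A hAp) (by norm_num)
  rw [← Finset.mul_sum, ← Finset.mul_sum] at upper
  have gl := grad_le n (d+1) P hP
  push_cast at gl
  have gl2 := mul_le_mul_of_nonneg_left gl
    (show 0 ≤ 2 * (2 * Real.exp ((d:ℝ)+1) * Real.exp (-r) * (4 * (k:ℝ))^d) by positivity)
  have l2 := mul_le_mul_of_nonneg_left lower (show 0 ≤ r by linarith)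
  have e1 : Real.exp (-(r+1)) = Real.exp (-r) / Real.exp 1 := by
    rw [← Real.exp_sub]; congr 1; ring
  rw [e1] at l2
  set W := cubeE n (fun x => P x ^ 2)
  have fin : r * D^2 * Real.exp (-r) ≤ (16 * Real.exp 1 * Real.exp ((d:ℝ)+1) * (4 * (k:ℝ))^d * ((d:ℝ)+1) * W) * Real.exp (-r) := by
    have c : r * (D^2 * (Real.exp (-r) / Real.exp 1)) ≤
       4 * (2 * (2 * Real.exp ((d:ℝ)+1) * Real.exp (-r) * (4 * (k:ℝ))^d) * (((d:ℝ)+1) * W)) := by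
      linarith
    have c2 := mul_le_mul_of_nonneg_left c (Real.exp_pos 1).le
    have e3 : Real.exp 1 * (r * (D^2 * (Real.exp (-r) / Real.exp 1))) = r * D^2 * Real.exp (-r) := by
      field_simp
    rw [e3] at c2
    linarith
  exact le_of_mul_le_mul_right fin (Real.exp_pos _)

theorem numeric (d : ℕ) (r t : ℝ) (hr : 1 ≤ r) (ht : t = r / ((d:ℝ)+1) + 1) :
    16 * Real.exp 1 * Real.exp ((d:ℝ)+1) * (4 * t)^d * ((d:ℝ)+1) / r ≤
      ((10000:ℝ)^(d+1)) * (t^(d+1) / t^2) := by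
  have ht1 : 1 ≤ t := by
    rw [ht]; have : 0 ≤ r / ((d:ℝ)+1) := by positivity
    linarith
  have hfrac : ((d:ℝ)+1) / r ≤ ((d:ℝ)+2) / t := by
    rw [div_le_div_iff₀ (by linarith) (by linarith), ht]
    have : ((d:ℝ)+1) * (r / ((d:ℝ)+1) + 1) = r + d + 1 := by field_simp; ring
    rw [this]
    have : (0:ℝ) ≤ d := by positivity
    nlinarith
  have hd2 : (d:ℝ)+2 ≤ 2 * 2^d := by
    have := one_add_mul_le_pow (show (-2:ℝ) ≤ 1 by norm_num) d
    norm_num at this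
    have h0 : (1:ℝ) ≤ 2^d := one_le_pow₀ (by norm_num)
    linarith
  have he : Real.exp 1 ≤ 3 := by linarith [Real.exp_one_lt_d9]
  have hed : Real.exp ((d:ℝ)+1) ≤ 3^(d+1) := by
    have : Real.exp ((d:ℝ)+1) = Real.exp 1 ^ (d+1) := by
      rw [← Real.exp_nat_mul]; push_cast; simp
    rw [this]; gcongr
  calc _ = 16 * Real.exp 1 * Real.exp ((d:ℝ)+1) * (4 * t)^d * (((d:ℝ)+1) / r) := by ring
    _ ≤ 16 * 3 * 3^(d+1) * (4 * t)^d * ((2 * 2^d) / t) := by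
        have hf : ((d:ℝ)+1) / r ≤ (2 * 2^d) / t := hfrac.trans (by gcongr)
        exact mul_le_mul (by gcongr) hf (by positivity) (by positivity)
    _ = 288 * 24^d * (t^(d+1) / t^2) := by
        rw [mul_pow, pow_succ, pow_succ, show (24:ℝ) = 3 * 4 * 2 by norm_num, mul_pow, mul_pow]
        field_simp
        ring
    _ ≤ _ := by
        gcongr
        rw [pow_succ, mul_comm]
        gcongr <;> norm_num

/-- Local tail bound: `a_{r+1} - a_r ≤ C^d (r/d + 1)^{d/2 - 1} ‖P(X)‖₂`. -/
theorem local_tail_bound :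
    ∃ C : ℝ, 0 < C ∧
      ∀ (n d : ℕ), 1 ≤ n → 1 ≤ d →
        ∀ P : (Fin n → Bool) → ℝ, IsPolyDeg n d P →
          ∀ r : ℝ, 1 ≤ r →
            ∀ ar ar1 : ℝ, IsQuantile n P r ar → IsQuantile n P (r + 1) ar1 →
              ar1 - ar ≤
                C ^ d * (r / (d : ℝ) + 1) ^ ((d : ℝ) / 2 - 1) *
                  Real.sqrt (cubeE n fun x => (P x) ^ 2) := by
  refine ⟨100, by norm_num, ?_⟩
  intro n d _ hd P hP r hr a a1 h h1
  obtain ⟨d, rfl⟩ : ∃ e, d = e + 1 := ⟨d - 1, by omega⟩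
  push_cast
  set t : ℝ := r / ((d:ℝ)+1) + 1 with ht
  have hq : 0 < r / ((d:ℝ)+1) := by positivity
  have ht0 : 0 < t := by linarith
  set W := cubeE n (fun x => P x ^ 2) with hW
  have hW0 : 0 ≤ W := cE_nonneg _ (fun x => by positivity)
  have hR : 0 ≤ (100:ℝ)^(d+1) * t ^ (((d:ℝ)+1)/2 - 1) * Real.sqrt W := by positivity
  rcases le_or_gt a1 a with hle | hD
  · linarith
  refine le_of_abs_le (abs_le_of_sq_le_sq ?_ hR)
  have hk1 : 1 ≤ ⌈r / ((d:ℝ)+1)⌉₊ := Nat.one_le_ceil_iff.2 hq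
  have hkr : r ≤ ((d:ℝ)+1) * (⌈r / ((d:ℝ)+1)⌉₊ : ℝ) := by
    have := Nat.le_ceil (r / ((d:ℝ)+1))
    rw [div_le_iff₀ (by positivity)] at this
    linarith
  have hkt : (⌈r / ((d:ℝ)+1)⌉₊ : ℝ) ≤ t := (Nat.ceil_lt_add_one hq.le).le
  have m := main_sq n d P (RDeg_of_poly n _ P hP) r hr a a1 h h1 hD _ hk1 hkr
  have nu := numeric d r t hr ht
  have m2 : r * (a1 - a)^2 ≤ (16 * Real.exp 1 * Real.exp ((d:ℝ)+1) * (4 * t)^d * ((d:ℝ)+1)) * W := by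
    refine m.trans ?_
    gcongr
  have hsq : (t ^ (((d:ℝ)+1)/2 - 1))^2 = t^(d+1) / t^2 := by
    rw [← Real.rpow_natCast, ← Real.rpow_mul ht0.le, ← Real.rpow_natCast, ← Real.rpow_natCast,
      ← Real.rpow_sub ht0]
    congr 1; push_cast; ring
  rw [mul_pow, mul_pow, hsq, Real.sq_sqrt hW0, ← pow_mul, mul_comm (d+1) 2, pow_mul]
  norm_num only
  calc (a1 - a)^2 = (r * (a1-a)^2) / r := by field_simp
    _ ≤ (16 * Real.exp 1 * Real.exp ((d:ℝ)+1) * (4 * t)^d * ((d:ℝ)+1)) * W / r := by gcongr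
    _ = (16 * Real.exp 1 * Real.exp ((d:ℝ)+1) * (4 * t)^d * ((d:ℝ)+1) / r) * W := by ring
    _ ≤ _ := by gcongr
end

section
/- There exists a universal constant C > 0 such that the following holds. Let n ≥ 1, d ≥ 1, let P be a polynomial of degree at most d on {-1,1}^n with E P(X) = 0 (X uniform on {-1,1}^n), and for r > 0 let a_r be an e^{-r}-quantile of P(X). Then for all r ≥ C·d, a_{r+1} ≤ a_r · [1 + C^d · (r/d + 1)^{d/2 - 1}]. -/
open Classical

namespace KS

variable {n : ℕ}

noncomputable def chi (S : Finset (Fin n)) (x : Fin n → Bool) : ℝ := ∏ i ∈ S, cubeSign (x i)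

def flip (i : Fin n) (x : Fin n → Bool) : Fin n → Bool := Function.update x i (!(x i))

lemma flip_flip (i : Fin n) (x : Fin n → Bool) : flip i (flip i x) = x := by
  simp [flip]

def flipEquiv (i : Fin n) : (Fin n → Bool) ≃ (Fin n → Bool) :=
  ⟨flip i, flip i, flip_flip i, flip_flip i⟩

lemma sign_sq (b : Bool) : cubeSign b * cubeSign b = 1 := by cases b <;> simp [cubeSign]

lemma sign_not (b : Bool) : cubeSign (!b) = - cubeSign b := by cases b <;> simp [cubeSign]

lemma E_flip (i : Fin n) (f : (Fin n → Bool) → ℝ) : cubeE n (fun x => f (flip i x)) = cubeE n f := by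
  unfold cubeE
  congr 1
  exact Equiv.sum_comp (flipEquiv i) f

lemma chi_flip_mem {i : Fin n} {S : Finset (Fin n)} (h : i ∈ S) (x : Fin n → Bool) :
    chi S (flip i x) = - chi S x := by
  unfold chi
  rw [← Finset.mul_prod_erase S _ h, ← Finset.mul_prod_erase S _ h]
  have : ∏ j ∈ S.erase i, cubeSign (flip i x j) = ∏ j ∈ S.erase i, cubeSign (x j) := by
    apply Finset.prod_congr rfl
    intro j hj
    rw [Finset.mem_erase] at hj
    simp [flip, hj.1]
  rw [this]
  simp [flip, sign_not]

lemma chi_flip_not_mem {i : Fin n} {S : Finset (Fin n)} (h : i ∉ S) (x : Fin n → Bool) :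
    chi S (flip i x) = chi S x := by
  unfold chi
  apply Finset.prod_congr rfl
  intro j hj
  have : j ≠ i := fun h' => h (h' ▸ hj)
  simp [flip, this]

lemma E_add (f g : (Fin n → Bool) → ℝ) : cubeE n (fun x => f x + g x) = cubeE n f + cubeE n g := by
  simp [cubeE, Finset.sum_add_distrib, add_div]

lemma E_sub (f g : (Fin n → Bool) → ℝ) : cubeE n (fun x => f x - g x) = cubeE n f - cubeE n g := by
  simp [cubeE, Finset.sum_sub_distrib, sub_div]

lemma E_mul_left (c : ℝ) (f : (Fin n → Bool) → ℝ) : cubeE n (fun x => c * f x) = c * cubeE n f := by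
  simp [cubeE, ← Finset.mul_sum, mul_div_assoc]

lemma E_sum {ι : Type*} (s : Finset ι) (f : ι → (Fin n → Bool) → ℝ) :
    cubeE n (fun x => ∑ i ∈ s, f i x) = ∑ i ∈ s, cubeE n (f i) := by
  simp only [cubeE, ← Finset.sum_div]
  rw [Finset.sum_comm]

lemma E_const (c : ℝ) : cubeE n (fun _ => c) = c := by
  simp [cubeE]

lemma E_mono {f g : (Fin n → Bool) → ℝ} (h : ∀ x, f x ≤ g x) : cubeE n f ≤ cubeE n g := by
  unfold cubeE
  gcongr with x
  exact h x

lemma E_nonneg {f : (Fin n → Bool) → ℝ} (h : ∀ x, 0 ≤ f x) : 0 ≤ cubeE n f := by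
  have := E_mono (f := fun _ => 0) (g := f) h
  rwa [E_const] at this

lemma E_eq_zero {f : (Fin n → Bool) → ℝ} (h : ∀ x, 0 ≤ f x) (h0 : cubeE n f ≤ 0) (x) : f x = 0 := by
  have h1 : cubeE n f = 0 := le_antisymm h0 (E_nonneg h)
  unfold cubeE at h1
  rw [div_eq_zero_iff] at h1
  have h2 : ∑ x, f x = 0 := h1.resolve_right (by positivity)
  exact (Finset.sum_eq_zero_iff_of_nonneg (fun x _ => h x)).1 h2 x (Finset.mem_univ x)

lemma E_cs (f g : (Fin n → Bool) → ℝ) :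
    (cubeE n (fun x => f x * g x)) ^ 2 ≤ cubeE n (fun x => f x ^ 2) * cubeE n (fun x => g x ^ 2) := by
  unfold cubeE
  have := Finset.sum_mul_sq_le_sq_mul_sq Finset.univ f g
  rw [div_pow, div_mul_div_comm, ← sq]
  gcongr

lemma E_chi_chi (S T : Finset (Fin n)) :
    cubeE n (fun x => chi S x * chi T x) = if S = T then 1 else 0 := by
  split_ifs with h
  · subst h
    have : ∀ x, chi S x * chi S x = 1 := by
      intro x
      unfold chi
      rw [← Finset.prod_mul_distrib]
      exact Finset.prod_eq_one (fun i _ => sign_sq _)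
    simp only [this]
    exact E_const 1
  · have : ∃ i, ¬ (i ∈ S ↔ i ∈ T) := by
      by_contra hc
      push Not at hc
      exact h (Finset.ext hc)
    obtain ⟨i, hi⟩ := this
    have h1 := E_flip i (fun x => chi S x * chi T x)
    have h2 : ∀ x, chi S (flip i x) * chi T (flip i x) = (-1) * (chi S x * chi T x) := by
      intro x
      by_cases hS : i ∈ S
      · have hT : i ∉ T := fun h' => hi ⟨fun _ => h', fun _ => hS⟩
        rw [chi_flip_mem hS, chi_flip_not_mem hT]; ring
      · have hT : i ∈ T := by
          by_contra h'
          exact hi ⟨fun a => absurd a hS, fun a => absurd a h'⟩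
        rw [chi_flip_mem hT, chi_flip_not_mem hS]; ring
    simp only [h2] at h1
    rw [E_mul_left] at h1
    linarith

noncomputable def hat (f : (Fin n → Bool) → ℝ) (S : Finset (Fin n)) : ℝ :=
  cubeE n (fun x => f x * chi S x)

noncomputable def F (a : Finset (Fin n) → ℝ) (x : Fin n → Bool) : ℝ := ∑ S, a S * chi S x

lemma hat_F (a : Finset (Fin n) → ℝ) (S : Finset (Fin n)) : hat (F a) S = a S := by
  unfold hat F
  simp only [Finset.sum_mul, mul_assoc]
  rw [E_sum]
  simp only [E_mul_left, E_chi_chi]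
  simp

lemma sum_chi (x y : Fin n → Bool) :
    ∑ S, chi S x * chi S y = if x = y then 2 ^ n else 0 := by
  have h1 : ∑ S, chi S x * chi S y = ∏ i, (1 + cubeSign (x i) * cubeSign (y i)) := by
    rw [Finset.prod_one_add, Finset.powerset_univ]
    simp only [chi, Finset.prod_mul_distrib]
  rw [h1]
  split_ifs with h
  · subst h
    simp [sign_sq]
    norm_num
  · have : ∃ i, x i ≠ y i := by
      by_contra hc
      push Not at hc
      exact h (funext hc)
    obtain ⟨i, hi⟩ := this
    apply Finset.prod_eq_zero (Finset.mem_univ i)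
    cases hx : x i <;> cases hy : y i <;> simp_all [cubeSign]

lemma F_hat (f : (Fin n → Bool) → ℝ) (x : Fin n → Bool) : F (hat f) x = f x := by
  unfold F hat cubeE
  simp only [div_mul_eq_mul_div, Finset.sum_mul]
  rw [← Finset.sum_div, Finset.sum_comm]
  simp only [mul_assoc, ← Finset.mul_sum, sum_chi]
  simp

lemma E_F_mul (a : Finset (Fin n) → ℝ) (g : (Fin n → Bool) → ℝ) :
    cubeE n (fun x => F a x * g x) = ∑ S, a S * hat g S := by
  unfold F hat
  simp only [Finset.sum_mul, mul_assoc]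
  rw [E_sum]
  simp only [E_mul_left, mul_comm]

lemma E_mul (f g : (Fin n → Bool) → ℝ) :
    cubeE n (fun x => f x * g x) = ∑ S, hat f S * hat g S := by
  rw [← E_F_mul]
  simp only [F_hat]

noncomputable def Lap (f : (Fin n → Bool) → ℝ) (x : Fin n → Bool) : ℝ :=
  ∑ i, (1/2) * (f x - f (flip i x))

lemma hat_Lap (f : (Fin n → Bool) → ℝ) (S : Finset (Fin n)) : hat (Lap f) S = S.card * hat f S := by
  unfold hat Lap
  simp only [Finset.sum_mul]
  rw [E_sum]
  have : ∀ i : Fin n, cubeE n (fun x => (1/2) * (f x - f (flip i x)) * chi S x)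
      = if i ∈ S then cubeE n (fun x => f x * chi S x) else 0 := by
    intro i
    have h1 : cubeE n (fun x => (1/2) * (f x - f (flip i x)) * chi S x)
      = (1/2) * (cubeE n (fun x => f x * chi S x) - cubeE n (fun x => f (flip i x) * chi S x)) := by
      rw [← E_sub, ← E_mul_left]
      congr 1; ext x; ring
    rw [h1, ← E_flip i (fun x => f (flip i x) * chi S x)]
    simp only [flip_flip]
    split_ifs with h
    · simp only [chi_flip_mem h]
      have : cubeE n (fun x => f x * - chi S x) = (-1) * cubeE n (fun x => f x * chi S x) := by
        rw [← E_mul_left]; congr 1; ext x; ring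
      rw [this]; ring
    · simp only [chi_flip_not_mem h]; ring
  simp only [this]
  simp

/-! Hypercontractivity -/

lemma two_point_aux (R u : ℝ) (k : ℕ) :
    0 ≤ R * u * (((R+u)^2)^k - ((R-u)^2)^k) ∧
    R * u * (((R+u)^2)^k - ((R-u)^2)^k) ≤ 2 * k * u^2 * (((R+u)^2)^k + ((R-u)^2)^k) := by
  induction k with
  | zero => simp
  | succ k ih =>
    set p := ((R+u)^2)^k with hp
    set q := ((R-u)^2)^k with hq
    have hp0 : 0 ≤ p := by positivity
    have hq0 : 0 ≤ q := by positivity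
    rw [pow_succ ((R+u)^2) k, pow_succ ((R-u)^2) k, ← hp, ← hq]
    obtain ⟨h1, h2⟩ := ih
    have e1 : R * u * (p * (R+u)^2 - q * (R-u)^2)
      = (R^2+u^2) * (R * u * (p - q)) + 2 * R^2 * u^2 * (p+q) := by ring
    have e2 : p * (R+u)^2 + q * (R-u)^2 = (R^2+u^2) * (p+q) + 2 * (R * u * (p-q)) := by ring
    rw [e1, e2]
    constructor
    · positivity
    · push_cast
      have h3 := mul_le_mul_of_nonneg_left h2 (by positivity : 0 ≤ R^2+u^2)
      have h4 : 0 ≤ u^4 * (p+q) := by positivity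
      have h5 : 0 ≤ (k+1:ℝ) * u^2 * (R * u * (p-q)) := by
        have : 0 ≤ (k+1:ℝ) * u^2 := by positivity
        exact mul_nonneg this h1
      nlinarith

lemma two_point (R u m : ℝ) (k : ℕ) (hm : 4 * (k:ℝ) ≤ m) :
    (((R+u)^2)^k + ((R-u)^2)^k) / 2 ≤ (R^2 + m * u^2)^k := by
  induction k with
  | zero => simp
  | succ k ih =>
    push_cast at hm
    have ih := ih (by linarith)
    have h2 := (two_point_aux R u k).2
    set p := ((R+u)^2)^k with hp
    set q := ((R-u)^2)^k with hq
    have hp0 : 0 ≤ p := by positivity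
    have hq0 : 0 ≤ q := by positivity
    have hm0 : 0 ≤ m := by
      have : (0:ℝ) ≤ k := by positivity
      linarith
    rw [pow_succ ((R+u)^2) k, pow_succ ((R-u)^2) k, ← hp, ← hq, pow_succ (R^2 + m * u^2)]
    have h3 : (p * (R+u)^2 + q * (R-u)^2)/2 ≤ (p+q)/2 * (R^2 + m * u^2) := by
      have : 0 ≤ (m - 4 * (k+1)) * (u^2 * (p+q)) := by
        apply mul_nonneg (by linarith) (by positivity)
      have : 0 ≤ u^2 * (p+q) := by positivity
      nlinarith
    exact h3.trans (mul_le_mul_of_nonneg_right ih (by positivity))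

lemma minkowski {k : ℕ} (hk : 1 ≤ k) {U V : (Fin n → Bool) → ℝ} {A B : ℝ} (hU : ∀ x, 0 ≤ U x)
    (hV : ∀ x, 0 ≤ V x) (hA : 0 ≤ A) (hB : 0 ≤ B) (h1 : cubeE n (fun x => U x ^ k) ≤ A ^ k)
    (h2 : cubeE n (fun x => V x ^ k) ≤ B ^ k) :
    cubeE n (fun x => (U x + V x) ^ k) ≤ (A + B) ^ k := by
  have hk0 : k ≠ 0 := by omega
  rcases hA.eq_or_lt with rfl | hA
  · rw [zero_pow hk0] at h1
    have := E_eq_zero (fun x => pow_nonneg (hU x) k) h1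
    have h0 : ∀ x, U x = 0 := fun x => (pow_eq_zero_iff hk0).1 (this x)
    simpa [h0] using h2
  rcases hB.eq_or_lt with rfl | hB
  · rw [zero_pow hk0] at h2
    have := E_eq_zero (fun x => pow_nonneg (hV x) k) h2
    have h0 : ∀ x, V x = 0 := fun x => (pow_eq_zero_iff hk0).1 (this x)
    simpa [h0] using h1
  have key : ∀ x, (U x + V x)^k ≤ (A+B)^k * (A/(A+B)) / A^k * U x ^ k
      + (A+B)^k * (B/(A+B)) / B^k * V x ^ k := by
    intro x
    have hx : U x / A ∈ Set.Ici (0:ℝ) := Set.mem_Ici.2 (by have := hU x; positivity)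
    have hy : V x / B ∈ Set.Ici (0:ℝ) := Set.mem_Ici.2 (by have := hV x; positivity)
    have ha : 0 ≤ A/(A+B) := by positivity
    have hb : 0 ≤ B/(A+B) := by positivity
    have hab : A/(A+B) + B/(A+B) = 1 := by field_simp
    have hc := (convexOn_pow (𝕜 := ℝ) k).2 hx hy ha hb hab
    simp only [smul_eq_mul] at hc
    have e : A/(A+B) * (U x / A) + B/(A+B) * (V x / B) = (U x + V x)/(A+B) := by field_simp
    rw [e, div_pow, div_pow, div_pow, div_le_iff₀ (by positivity)] at hc
    refine hc.trans (le_of_eq ?_)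
    ring
  refine (E_mono key).trans ?_
  rw [E_add, E_mul_left, E_mul_left]
  calc _ ≤ (A+B)^k * (A/(A+B)) / A^k * A^k + (A+B)^k * (B/(A+B)) / B^k * B^k := by gcongr
    _ = (A+B)^k := by field_simp

lemma hyper_aux (k : ℕ) (hk : 1 ≤ k) (T : Finset (Fin n)) : ∀ a : Finset (Fin n) → ℝ,
    cubeE n (fun x => ((∑ S ∈ T.powerset, a S * chi S x)^2)^k)
      ≤ (∑ S ∈ T.powerset, (4*k:ℝ)^S.card * a S ^ 2)^k := by
  induction T using Finset.induction_on with
  | empty => intro a; simp [chi, E_const]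
  | insert i T hi ih =>
    intro a
    set R : (Fin n → Bool) → ℝ := fun x => ∑ S ∈ T.powerset, a S * chi S x with hR
    set Q : (Fin n → Bool) → ℝ := fun x => ∑ S ∈ T.powerset, a (insert i S) * chi S x with hQ
    have hmem : ∀ S ∈ T.powerset, i ∉ S := fun S hS h => hi (Finset.mem_powerset.1 hS h)
    have hdec : ∀ x, ∑ S ∈ (insert i T).powerset, a S * chi S x = R x + cubeSign (x i) * Q x := by
      intro x
      rw [Finset.sum_powerset_insert hi]
      simp only [hR, hQ, Finset.mul_sum]
      congr 1
      apply Finset.sum_congr rfl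
      intro S hS
      have : chi (insert i S) x = cubeSign (x i) * chi S x := by
        unfold chi
        rw [Finset.prod_insert (hmem S hS)]
      rw [this]; ring
    have hRf : ∀ x, R (flip i x) = R x := by
      intro x
      apply Finset.sum_congr rfl
      intro S hS
      rw [chi_flip_not_mem (hmem S hS)]
    have hQf : ∀ x, Q (flip i x) = Q x := by
      intro x
      apply Finset.sum_congr rfl
      intro S hS
      rw [chi_flip_not_mem (hmem S hS)]
    have hsf : ∀ x : Fin n → Bool, cubeSign (flip i x i) = - cubeSign (x i) := by
      intro x; simp [flip, sign_not]
    have hcoef : ∑ S ∈ (insert i T).powerset, (4*k:ℝ)^S.card * a S ^ 2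
        = ∑ S ∈ T.powerset, (4*k:ℝ)^S.card * a S ^ 2
          + (4*k) * ∑ S ∈ T.powerset, (4*k:ℝ)^S.card * a (insert i S) ^ 2 := by
      rw [Finset.sum_powerset_insert hi, Finset.mul_sum]
      congr 1
      apply Finset.sum_congr rfl
      intro S hS
      rw [Finset.card_insert_of_notMem (hmem S hS)]
      ring
    simp only [hdec]
    rw [hcoef]
    have h1 := E_flip i (fun x => ((R x + cubeSign (x i) * Q x)^2)^k)
    simp only [hRf, hQf, hsf] at h1
    have h2 : cubeE n (fun x => ((R x + cubeSign (x i) * Q x)^2)^k)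
      = cubeE n (fun x => (((R x + cubeSign (x i) * Q x)^2)^k
          + ((R x - cubeSign (x i) * Q x)^2)^k)/2) := by
      have e : ∀ x, (((R x + cubeSign (x i) * Q x)^2)^k
          + ((R x - cubeSign (x i) * Q x)^2)^k)/2 = (1/2) * (((R x + cubeSign (x i) * Q x)^2)^k
          + ((R x + -cubeSign (x i) * Q x)^2)^k) := by intro x; ring
      simp only [e]
      rw [E_mul_left, E_add, h1]; ring
    rw [h2]
    have h3 : ∀ x, (((R x + cubeSign (x i) * Q x)^2)^k
          + ((R x - cubeSign (x i) * Q x)^2)^k)/2 ≤ (R x ^2 + (4*k) * Q x ^2)^k := by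
      intro x
      refine (two_point (R x) (cubeSign (x i) * Q x) (4*k) k le_rfl).trans (le_of_eq ?_)
      rw [mul_pow, pow_two (cubeSign _), sign_sq, one_mul]
    refine (E_mono h3).trans ?_
    refine minkowski hk (fun x => by positivity) (fun x => by positivity)
      (Finset.sum_nonneg fun S _ => by positivity)
      (mul_nonneg (by positivity) (Finset.sum_nonneg fun S _ => by positivity)) (ih a) ?_
    simp only [mul_pow _ _ k]
    rw [E_mul_left]
    gcongr
    exact ih (fun S => a (insert i S))

lemma hyper (k : ℕ) (hk : 1 ≤ k) (a : Finset (Fin n) → ℝ) :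
    cubeE n (fun x => (F a x ^2)^k) ≤ (∑ S, (4*k:ℝ)^S.card * a S ^ 2)^k := by
  have := hyper_aux k hk Finset.univ a
  simpa [F] using this

/-- Faber-Krahn type inequality. -/
lemma faber {f I : (Fin n → Bool) → ℝ} (hI : ∀ x, I x * I x = I x) (hfI : ∀ x, f x * I x = f x)
    {r : ℝ} (hE : cubeE n I ≤ Real.exp (-r)) :
    r * cubeE n (fun x => f x ^ 2) ≤ 6 * cubeE n (fun x => f x * Lap f x) := by
  set b := hat f with hb
  set g := F (fun S => (1/8:ℝ)^S.card * b S) with hg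
  set N := ∑ S, (1/8:ℝ)^S.card * b S ^ 2 with hN
  have hN0 : 0 ≤ N := Finset.sum_nonneg fun S _ => by positivity
  set V := cubeE n (fun x => f x ^ 2) with hV
  have hV' : V = ∑ S, b S ^ 2 := by
    have := E_mul f f
    simp only [← sq] at this
    exact this
  have hV0 : 0 ≤ V := E_nonneg fun x => by positivity
  have h1 : cubeE n (fun x => f x * (I x * g x)) = N := by
    have : ∀ x, f x * (I x * g x) = g x * f x := by
      intro x; rw [← mul_assoc, hfI, mul_comm]
    simp only [this]
    rw [hg, E_F_mul]
    apply Finset.sum_congr rfl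
    intro S _; rw [← hb]; ring
  have h2 : N^2 ≤ V * cubeE n (fun x => I x * g x ^ 2) := by
    rw [← h1]
    refine (E_cs _ _).trans (le_of_eq ?_)
    congr 2; ext x
    rw [mul_pow, sq (I x), hI]
  have h3 : (cubeE n (fun x => I x * g x ^ 2))^2 ≤ Real.exp (-r) * N^2 := by
    refine (E_cs _ _).trans ?_
    simp only [sq (I _), hI]
    have h4 := hyper 2 (by norm_num) (fun S => (1/8:ℝ)^S.card * b S)
    have e : ∑ S, (4*(2:ℕ):ℝ)^S.card * ((1/8:ℝ)^S.card * b S)^2 = N := by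
      apply Finset.sum_congr rfl
      intro S _
      have : (4*(2:ℕ):ℝ)^S.card * (1/8:ℝ)^S.card = 1 := by
        rw [← mul_pow]; norm_num
      calc _ = ((4*(2:ℕ):ℝ)^S.card * (1/8:ℝ)^S.card) * ((1/8:ℝ)^S.card * b S^2) := by ring
        _ = _ := by rw [this, one_mul]
    rw [e] at h4
    exact mul_le_mul hE h4 (E_nonneg fun x => by positivity) (by positivity)
  have h5 : cubeE n (fun x => I x * g x ^ 2) ≤ Real.exp (-(r/2)) * N := by
    apply le_of_sq_le_sq _ (by positivity)
    refine h3.trans (le_of_eq ?_)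
    rw [mul_pow, ← Real.exp_nat_mul]
    congr 2; push_cast; ring
  have h6 : N ≤ Real.exp (-(r/2)) * V := by
    rcases hN0.eq_or_lt with h0 | h0
    · rw [← h0]; positivity
    · have : N * N ≤ (Real.exp (-(r/2)) * V) * N := by
        calc N * N = N^2 := by ring
          _ ≤ V * (Real.exp (-(r/2)) * N) := h2.trans (by gcongr)
          _ = _ := by ring
      exact le_of_mul_le_mul_right this h0
  set D := cubeE n (fun x => f x * Lap f x) with hD
  have hD' : D = ∑ S, S.card * b S ^ 2 := by
    rw [hD, E_mul]
    apply Finset.sum_congr rfl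
    intro S _; rw [hat_Lap]; ring
  have h7 : Real.exp (-(r/2)) * (V - 3 * D + r/2 * V) ≤ N := by
    rw [hV', hD', hN, Finset.mul_sum, Finset.mul_sum, ← Finset.sum_sub_distrib,
      ← Finset.sum_add_distrib, Finset.mul_sum]
    apply Finset.sum_le_sum
    intro S _
    have e : Real.exp (-(r/2)) * (1 - 3 * S.card + r/2) ≤ (1/8:ℝ)^S.card := by
      have a1 : Real.exp (-3) ≤ 1/8 := by
        rw [Real.exp_neg, one_div]
        apply inv_anti₀ (by norm_num)
        have : (2:ℝ) ≤ Real.exp 1 := by linarith [Real.add_one_le_exp (1:ℝ)]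
        calc (8:ℝ) = 2^3 := by norm_num
          _ ≤ (Real.exp 1)^3 := by gcongr
          _ = Real.exp 3 := by rw [← Real.exp_nat_mul]; norm_num
      calc _ ≤ Real.exp (-(r/2)) * Real.exp (-3 * S.card + r/2) := by
            gcongr
            have := Real.add_one_le_exp (-3 * (S.card:ℝ) + r/2)
            linarith
        _ = (Real.exp (-3))^S.card := by
            rw [← Real.exp_add, ← Real.exp_nat_mul]; congr 1; ring
        _ ≤ _ := by gcongr
    calc _ = (Real.exp (-(r/2)) * (1 - 3 * S.card + r/2)) * b S^2 := by ring
      _ ≤ _ := by gcongr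
  have h8 : V - 3 * D + r/2 * V ≤ V := le_of_mul_le_mul_left (h7.trans h6) (Real.exp_pos _)
  linarith

lemma holder_ind {k : ℕ} (hk : 1 ≤ k) {W I : (Fin n → Bool) → ℝ} {A b : ℝ} (hW : ∀ x, 0 ≤ W x)
    (hI : ∀ x, I x * I x = I x) (hA : 0 < A) (hb : 0 < b)
    (h1 : cubeE n (fun x => W x ^ k) ≤ A ^ k) (h2 : cubeE n I ≤ b ^ k) :
    cubeE n (fun x => I x * W x) * b ≤ A * b ^ k := by
  have hI0 : ∀ x, 0 ≤ I x := fun x => by rw [← hI]; exact mul_self_nonneg _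
  have hI1 : ∀ x, I x ≤ 1 := fun x => by nlinarith [hI x, mul_self_nonneg (I x - 1)]
  have hk' : (1:ℝ) ≤ k := by exact_mod_cast hk
  have key : ∀ x, (k * b / A) * (I x * W x) ≤ (b^k / A^k) * W x ^ k + (k - 1) * I x := by
    intro x
    have hy : 0 ≤ W x * b / A := by have := hW x; positivity
    have hB := one_add_mul_le_pow (a := W x * b / A - 1) (by linarith) k
    rw [show 1 + (W x * b / A - 1) = W x * b / A by ring] at hB
    have h3 := mul_le_mul_of_nonneg_left hB (hI0 x)
    have h4 : I x * (W x * b / A)^k ≤ (W x * b / A)^k := mul_le_of_le_one_left (by positivity) (hI1 x)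
    have e : (b^k / A^k) * W x ^ k = (W x * b / A)^k := by rw [div_pow, mul_pow]; ring
    rw [e]
    calc _ = I x * (1 + k * (W x * b / A - 1)) + (k-1) * I x := by ring
      _ ≤ _ := by linarith
  have h5 := E_mono key
  rw [E_add, E_mul_left, E_mul_left, E_mul_left] at h5
  have h6 : b^k / A^k * cubeE n (fun x => W x ^ k) ≤ b^k := by
    calc _ ≤ b^k / A^k * A^k := by gcongr
      _ = _ := by field_simp
  have h7 : (k - 1) * cubeE n I ≤ (k-1) * b^k := mul_le_mul_of_nonneg_left h2 (by linarith)
  have h8 : k * b / A * cubeE n (fun x => I x * W x) ≤ k * b^k := by linarith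
  have h9 : k * b / A * cubeE n (fun x => I x * W x)
    = k * ((cubeE n (fun x => I x * W x) * b) / A) := by ring
  rw [h9] at h8
  have h10 := le_of_mul_le_mul_left h8 (by linarith)
  rw [div_le_iff₀ hA] at h10
  linarith

lemma coef_bound {d : ℕ} {m : ℝ} (hm : 1 ≤ m) {b : Finset (Fin n) → ℝ}
    (hb : ∀ S, d < S.card → b S = 0) :
    ∑ S, m ^ S.card * b S ^ 2 ≤ m ^ d * ∑ S, b S ^ 2 := by
  rw [Finset.mul_sum]
  apply Finset.sum_le_sum
  intro S _
  by_cases h : d < S.card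
  · simp [hb S h]
  · gcongr
    omega

lemma parseval (a : Finset (Fin n) → ℝ) : cubeE n (fun x => F a x ^ 2) = ∑ S, a S ^ 2 := by
  simp only [sq]
  rw [E_F_mul]
  simp only [hat_F]

lemma exp_le_eight_pow {d : ℕ} {r : ℝ} (hd : 1 ≤ d) (hr : 10 * (d:ℝ) ≤ r) :
    Real.exp (-r) * (4 * 8 ^ d) ^ 2 ≤ 1 := by
  have h1 : (4 * 8 ^ d : ℝ) ^ 2 ≤ Real.exp r := by
    have a0 : (2:ℝ) ≤ Real.exp 1 := by linarith [Real.add_one_le_exp (1:ℝ)]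
    have a1 : (4:ℝ)^2 ≤ 16^d := by
      calc (4:ℝ)^2 = 16^1 := by norm_num
        _ ≤ 16^d := pow_le_pow_right₀ (by norm_num) hd
    calc (4 * 8 ^ d : ℝ) ^ 2 = 4^2 * (8^d)^2 := by ring
      _ ≤ 16^d * (8^d)^2 := by gcongr
      _ = ((2:ℝ)^10)^d := by rw [← pow_mul, mul_comm d 2, pow_mul, ← mul_pow]; norm_num
      _ ≤ ((Real.exp 1)^10)^d := by gcongr
      _ = Real.exp (10 * d) := by
          rw [← pow_mul, ← Real.exp_nat_mul]; congr 1; push_cast; ring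
      _ ≤ _ := Real.exp_le_exp.2 hr
  calc _ ≤ Real.exp (-r) * Real.exp r := by gcongr
    _ = 1 := by rw [← Real.exp_add]; simp

lemma lower {d : ℕ} (hd : 1 ≤ d) {a : Finset (Fin n) → ℝ} (ha : ∀ S, d < S.card → a S = 0)
    (hP : cubeE n (F a) = 0) {I : (Fin n → Bool) → ℝ} {ar r s : ℝ}
    (hI : ∀ x, I x = if ar < F a x then 1 else 0) (hr : 10 * (d:ℝ) ≤ r)
    (hE : cubeE n I ≤ Real.exp (-r)) (hs : 0 < s) (hV : cubeE n (fun x => F a x ^ 2) = s ^ 2) :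
    s ≤ 4 * 8 ^ d * ar := by
  set K : ℝ := 8 ^ d with hK
  have hK0 : 0 < K := by positivity
  set M := cubeE n (fun x => |F a x|) with hM
  have h4 : cubeE n (fun x => (F a x ^ 2) ^ 2) ≤ (K * s^2)^2 := by
    refine (hyper 2 (by norm_num) a).trans ?_
    have := coef_bound (m := (4 * (2:ℕ):ℝ)) (by norm_num) ha
    rw [← parseval, hV] at this
    have e : (4 * (2:ℕ):ℝ) = 8 := by norm_num
    rw [e] at this ⊢
    have h0 : 0 ≤ ∑ S : Finset (Fin n), (8:ℝ)^S.card * a S ^ 2 :=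
      Finset.sum_nonneg fun S _ => by positivity
    gcongr
  have hpt : ∀ x, 3 * (s*K)^2 * F a x ^ 2 ≤ 2 * (s*K)^3 * |F a x| + (F a x ^ 2)^2 := by
    intro x
    have hsK : 0 < s * K := by positivity
    generalize s * K = c at *
    rw [← sq_abs (F a x)]
    have ht := abs_nonneg (F a x)
    generalize |F a x| = t at *
    have : 0 ≤ t * (t - c)^2 * (t + 2*c) := by positivity
    nlinarith
  have hint := E_mono hpt
  rw [E_mul_left, E_add, E_mul_left, hV, ← hM] at hint
  have hMs : s ≤ K * M := by
    have h5 : 2 * (s^3 * K^2) * s ≤ 2 * (s^3 * K^2) * (K * M) := by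
      nlinarith
    exact le_of_mul_le_mul_left h5 (by positivity)
  have hplus : cubeE n (fun x => |F a x| + F a x) = M := by
    rw [E_add]
    have : cubeE n (fun x => F a x) = 0 := hP
    rw [this, add_zero]
  have hpt2 : ∀ x, |F a x| + F a x ≤ 2 * max ar 0 + 2 * (|F a x| * I x) := by
    intro x
    rw [hI]
    split_ifs with h
    · have := le_max_right ar 0
      have := le_abs_self (F a x)
      linarith
    · push Not at h
      have := le_max_right ar 0
      have := le_max_left ar 0
      rcases abs_cases (F a x) with ⟨h1, _⟩ | ⟨h1, _⟩ <;> rw [h1] <;> linarith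
  have h6 := E_mono hpt2
  rw [hplus, E_add, E_const, E_mul_left] at h6
  set J := cubeE n (fun x => |F a x| * I x) with hJ
  have hII : ∀ x, I x ^ 2 = I x := by
    intro x; rw [hI]; split_ifs <;> norm_num
  have h7 : J ^ 2 ≤ s^2 * Real.exp (-r) := by
    refine (E_cs _ _).trans ?_
    simp only [hII, sq_abs]
    rw [hV]
    gcongr
  have h8 : 4 * K * J ≤ s := by
    apply le_of_sq_le_sq _ hs.le
    have := exp_le_eight_pow hd hr
    rw [← hK] at this
    calc (4 * K * J)^2 = J^2 * (4*K)^2 := by ring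
      _ ≤ s^2 * Real.exp (-r) * (4*K)^2 := by gcongr
      _ = s^2 * (Real.exp (-r) * (4*K)^2) := by ring
      _ ≤ s^2 * 1 := by gcongr
      _ = s^2 := by ring
  have h9 : s ≤ 4 * K * max ar 0 := by nlinarith
  rcases le_total ar 0 with h | h
  · rw [max_eq_right h] at h9; linarith
  · rwa [max_eq_left h] at h9

lemma increment {d : ℕ} (hd : 1 ≤ d) {a : Finset (Fin n) → ℝ} (ha : ∀ S, d < S.card → a S = 0)
    {I : (Fin n → Bool) → ℝ} {ar r s δ : ℝ}
    (hI : ∀ x, I x = if ar < F a x then 1 else 0) (hr : 10 * (d:ℝ) ≤ r)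
    (hE : cubeE n I ≤ Real.exp (-r)) (hs : 0 < s) (hV : cubeE n (fun x => F a x ^ 2) = s ^ 2)
    (hδ : 0 < δ)
    (hE1 : Real.exp (-(r+1)) ≤ cubeE n (fun x => if ar + δ ≤ F a x then 1 else 0)) :
    r^2 * δ^2 ≤ 36 * (4 * (r/d+1))^d * d^2 * s^2 * Real.exp (d+1) := by
  have hd' : (1:ℝ) ≤ d := by exact_mod_cast hd
  have hr0 : 0 < r := by linarith
  set f : (Fin n → Bool) → ℝ := fun x => max (F a x - ar) 0 with hf
  set L := Lap (F a) with hL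
  have hII : ∀ x, I x * I x = I x := by
    intro x; rw [hI]; split_ifs <;> norm_num
  have hfI : ∀ x, f x * I x = f x := by
    intro x
    rw [hI]
    split_ifs with h
    · ring
    · have : f x = 0 := max_eq_right (by linarith)
      rw [this]; ring
  set V := cubeE n (fun x => f x ^ 2) with hVf
  have h1 : δ^2 * Real.exp (-(r+1)) ≤ V := by
    refine (mul_le_mul_of_nonneg_left hE1 (by positivity)).trans ?_
    rw [← E_mul_left]
    apply E_mono
    intro x
    split_ifs with h
    · have : δ ≤ f x := le_max_of_le_left (by linarith)
      rw [mul_one]; gcongr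
    · rw [mul_zero]; positivity
  have hV0 : 0 < V := lt_of_lt_of_le (by positivity) h1
  have h2 : r * V ≤ 6 * cubeE n (fun x => f x * (I x * L x)) := by
    refine (faber hII hfI hE).trans ?_
    gcongr
    apply E_mono
    intro x
    rw [← mul_assoc, hfI]
    by_cases h : ar < F a x
    · have hfx : f x = F a x - ar := max_eq_left (by linarith)
      apply mul_le_mul_of_nonneg_left _ (le_max_right _ _)
      rw [hL]
      unfold Lap
      apply Finset.sum_le_sum
      intro i _
      have : F a (flip i x) - ar ≤ f (flip i x) := le_max_left _ _
      linarith
    · have : f x = 0 := max_eq_right (by linarith)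
      rw [this]; simp
  set G := cubeE n (fun x => I x * L x ^ 2) with hG
  have h3 : (cubeE n (fun x => f x * (I x * L x)))^2 ≤ V * G := by
    refine (E_cs _ _).trans (le_of_eq ?_)
    congr 2; ext x
    rw [mul_pow, sq (I x), hII]
  have h4 : r^2 * V ≤ 36 * G := by
    have : (r^2 * V) * V ≤ (36 * G) * V := by
      calc (r^2 * V) * V = (r * V)^2 := by ring
        _ ≤ (6 * cubeE n (fun x => f x * (I x * L x)))^2 := by gcongr
        _ = 36 * (cubeE n (fun x => f x * (I x * L x)))^2 := by ring
        _ ≤ 36 * (V * G) := by gcongr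
        _ = _ := by ring
    exact le_of_mul_le_mul_right this hV0
  set k := ⌈r/d⌉₊ with hk
  have hk1 : r/d ≤ k := Nat.le_ceil _
  have hk2 : (k:ℝ) ≤ r/d + 1 := (Nat.ceil_lt_add_one (by positivity)).le
  have hk0 : 1 ≤ k := Nat.one_le_iff_ne_zero.2 (Nat.ceil_pos.2 (by positivity)).ne'
  have hk0' : (1:ℝ) ≤ k := by exact_mod_cast hk0
  set A : ℝ := (4*k)^d * (d^2 * s^2) with hA
  have hA0 : 0 < A := by positivity
  have h5 : cubeE n (fun x => (L x ^ 2)^k) ≤ A^k := by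
    have hyp := hyper k hk0 (hat L)
    simp only [F_hat] at hyp
    refine hyp.trans ?_
    have hh : ∀ S, hat L S = S.card * a S := by
      intro S; rw [hL, hat_Lap, hat_F]
    have hz : ∀ S, d < S.card → hat L S = 0 := by
      intro S hS; rw [hh, ha S hS, mul_zero]
    have hcb := coef_bound (m := 4 * (k:ℝ)) (by linarith) hz
    have hsum : ∑ S, hat L S ^ 2 ≤ d^2 * s^2 := by
      rw [← hV, parseval, Finset.mul_sum]
      apply Finset.sum_le_sum
      intro S _
      rw [hh, mul_pow]
      by_cases h : d < S.card
      · simp [ha S h]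
      · have : (S.card:ℝ) ≤ d := by exact_mod_cast (not_lt.1 h)
        gcongr
    have h0 : 0 ≤ ∑ S, (4*(k:ℝ))^S.card * hat L S ^ 2 :=
      Finset.sum_nonneg fun S _ => by positivity
    apply pow_le_pow_left₀ h0
    refine hcb.trans ?_
    rw [hA]
    gcongr
  have hb : (Real.exp (-(r/k)))^k = Real.exp (-r) := by
    rw [← Real.exp_nat_mul]; congr 1; field_simp
  have h6 := holder_ind hk0 (fun x => sq_nonneg (L x)) hII hA0 (Real.exp_pos (-(r/k))) h5
    (by rw [hb]; exact hE)
  rw [hb, ← hG] at h6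
  have hG0 : 0 ≤ G := E_nonneg fun x => mul_nonneg (by rw [← hII]; exact mul_self_nonneg _) (sq_nonneg _)
  have h7 : Real.exp (-(d:ℝ)) ≤ Real.exp (-(r/k)) := by
    apply Real.exp_le_exp.2
    have : r/k ≤ d := by
      rw [div_le_iff₀ (by linarith)]
      rw [div_le_iff₀ (by linarith)] at hk1
      linarith
    linarith
  have h8 : G * Real.exp (-(d:ℝ)) ≤ A * Real.exp (-r) :=
    (mul_le_mul_of_nonneg_left h7 hG0).trans h6
  have h9 : A ≤ (4 * (r/d+1))^d * (d^2 * s^2) := by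
    rw [hA]; gcongr
  calc r^2 * δ^2 = r^2 * (δ^2 * Real.exp (-(r+1))) * Real.exp (-d) * Real.exp (d + 1 + r) := by
        rw [mul_assoc (r^2), mul_assoc, mul_assoc (δ^2), mul_assoc (δ^2), ← Real.exp_add,
          ← Real.exp_add, show -(r+1) + -(d:ℝ) + (d + 1 + r) = 0 by ring, Real.exp_zero, mul_one]
    _ ≤ r^2 * V * Real.exp (-d) * Real.exp (d + 1 + r) := by gcongr
    _ ≤ 36 * G * Real.exp (-d) * Real.exp (d + 1 + r) := by gcongr
    _ = 36 * (G * Real.exp (-d)) * Real.exp (d + 1 + r) := by ring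
    _ ≤ 36 * (A * Real.exp (-r)) * Real.exp (d + 1 + r) := by gcongr
    _ = 36 * A * Real.exp (d+1) := by
        rw [← mul_assoc, mul_assoc (36 * A), ← Real.exp_add]; congr 2; ring
    _ ≤ 36 * ((4 * (r/d+1))^d * (d^2 * s^2)) * Real.exp (d+1) := by gcongr
    _ = _ := by ring

lemma final_num {d : ℕ} (hd : 1 ≤ d) {r s δ ar : ℝ} (hr : 10 * (d:ℝ) ≤ r) (hs : 0 < s)
    (h1 : s ≤ 4 * 8 ^ d * ar)
    (h2 : r^2 * δ^2 ≤ 36 * (4 * (r/d+1))^d * d^2 * s^2 * Real.exp (d+1)) :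
    δ ≤ ar * ((10000:ℝ)^d * (r/d+1) ^ ((d:ℝ)/2 - 1)) := by
  have hd' : (1:ℝ) ≤ d := by exact_mod_cast hd
  have har : 0 < ar := by
    by_contra h
    push Not at h
    have : 4 * 8 ^ d * ar ≤ 0 := mul_nonpos_of_nonneg_of_nonpos (by positivity) h
    linarith
  set q := r/d + 1 with hq
  have hr0 : 0 < r := by linarith
  have hq0 : 0 < q := by positivity
  have hqr : q * d ≤ 2 * r := by
    rw [hq, add_mul, div_mul_cancel₀ _ (by positivity)]; linarith
  have he : Real.exp (d+1) ≤ 3^d * 3 := by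
    rw [Real.exp_add, ← mul_one (d:ℝ), Real.exp_nat_mul]
    have := Real.exp_one_lt_three.le
    gcongr
  have h3 : (q * δ)^2 ≤ 6912 * 768^d * q^d * ar^2 := by
    have : d^2 * (q * δ)^2 ≤ d^2 * (6912 * 768^d * q^d * ar^2) := by
      calc d^2 * (q * δ)^2 = (q * d)^2 * δ^2 := by ring
        _ ≤ (2 * r)^2 * δ^2 := by gcongr
        _ = 4 * (r^2 * δ^2) := by ring
        _ ≤ 4 * (36 * (4 * q)^d * d^2 * (4 * 8 ^ d * ar)^2 * (3^d * 3)) := by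
            refine mul_le_mul_of_nonneg_left (h2.trans ?_) (by norm_num)
            gcongr
        _ = d^2 * (6912 * (4^d * (8^d)^2 * 3^d) * q^d * ar^2) := by rw [mul_pow 4 q]; ring
        _ = _ := by
            have : (4:ℝ)^d * (8^d)^2 * 3^d = 768^d := by
              rw [← pow_mul, mul_comm d 2, pow_mul, ← mul_pow, ← mul_pow]; norm_num
            rw [this]
    exact le_of_mul_le_mul_left this (by positivity)
  have h4 : (6912:ℝ) * 768^d ≤ (10000^d)^2 := by
    calc (6912:ℝ) * 768^d ≤ 6912^d * 768^d := by
          gcongr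
          exact le_self_pow₀ (by norm_num) (by omega)
      _ = (6912*768)^d := by rw [mul_pow]
      _ ≤ (10000^2)^d := by gcongr; norm_num
      _ = _ := by rw [← pow_mul, ← pow_mul, mul_comm]
  have e1 : q ^ ((d:ℝ)/2 - 1) * q = q ^ ((d:ℝ)/2) := by
    rw [Real.rpow_sub_one hq0.ne']; field_simp
  have e2 : (q ^ ((d:ℝ)/2))^2 = q^d := by
    rw [← Real.rpow_natCast, ← Real.rpow_mul hq0.le, ← Real.rpow_natCast]
    congr 1; push_cast; ring
  have h5 : q * δ ≤ ar * 10000^d * q ^ ((d:ℝ)/2) := by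
    apply le_of_sq_le_sq _ (by positivity)
    calc (q * δ)^2 ≤ 6912 * 768^d * q^d * ar^2 := h3
      _ ≤ (10000^d)^2 * q^d * ar^2 := by gcongr
      _ = _ := by rw [← e2]; ring
  rw [← e1] at h5
  have : q * δ ≤ q * (ar * ((10000:ℝ)^d * q ^ ((d:ℝ)/2 - 1))) := by linarith
  exact le_of_mul_le_mul_left this hq0

lemma cubePr_eq (p : (Fin n → Bool) → Prop) :
    cubePr n {x | p x} = cubeE n (fun x => if p x then 1 else 0) := rfl

end KS

/-- Multiplicative local tail bound:
for `r ≥ C d`, `a_{r+1} ≤ a_r [1 + C^d (r/d + 1)^{d/2 - 1}]` when `E P(X) = 0`. -/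
theorem multiplicative_local_tail_bound :
    ∃ C : ℝ, 0 < C ∧
      ∀ (n d : ℕ), 1 ≤ n → 1 ≤ d →
        ∀ P : (Fin n → Bool) → ℝ, IsPolyDeg n d P →
          cubeE n P = 0 →
            ∀ r : ℝ, C * (d : ℝ) ≤ r →
              ∀ ar ar1 : ℝ, IsQuantile n P r ar → IsQuantile n P (r + 1) ar1 →
                ar1 ≤ ar * (1 + C ^ d * (r / (d : ℝ) + 1) ^ ((d : ℝ) / 2 - 1)) := by
  refine ⟨10000, by norm_num, ?_⟩
  intro n d hn hd P hP hEP r hr ar ar1 h1 h2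
  obtain ⟨a, ha, hPa⟩ := hP
  have hPF : P = KS.F a := funext hPa
  subst hPF
  have hd' : (1:ℝ) ≤ d := by exact_mod_cast hd
  have hr' : 10 * (d:ℝ) ≤ r := by linarith
  have hr0 : 0 < r := by linarith
  obtain ⟨h1a, h1b⟩ := h1
  obtain ⟨h2a, h2b⟩ := h2
  rw [KS.cubePr_eq] at h1a h1b h2a h2b
  have hq0 : 0 < r / d + 1 := by positivity
  set V := cubeE n (fun x => KS.F a x ^ 2) with hV
  have hV0 : 0 ≤ V := KS.E_nonneg fun x => by positivity
  rcases hV0.eq_or_lt with h0 | h0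
  · have hz : ∀ x, KS.F a x = 0 := fun x =>
      (pow_eq_zero_iff (two_ne_zero)).1 (KS.E_eq_zero (fun x => sq_nonneg (KS.F a x)) h0.symm.le x)
    simp only [hz] at h1b h2a
    have ha0 : 0 ≤ ar := by
      by_contra h
      simp only [h, if_false] at h1b
      rw [KS.E_const] at h1b
      have : Real.exp (-r) < 1 := (Real.exp_lt_exp.2 (by linarith : -r < 0)).trans_eq Real.exp_zero
      linarith
    have hb0 : ar1 ≤ 0 := by
      by_contra h
      simp only [h, if_false] at h2a
      rw [KS.E_const] at h2a
      linarith [Real.exp_pos (-(r+1))]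
    refine hb0.trans ?_
    positivity
  · set s := Real.sqrt V with hs
    have hs0 : 0 < s := Real.sqrt_pos.2 h0
    have hVs : cubeE n (fun x => KS.F a x ^ 2) = s^2 := (Real.sq_sqrt hV0).symm
    have hE : cubeE n (fun x => if ar < KS.F a x then (1:ℝ) else 0) ≤ Real.exp (-r) := by
      have e : cubeE n (fun x => if ar < KS.F a x then (1:ℝ) else 0)
          = 1 - cubeE n (fun x => if KS.F a x ≤ ar then (1:ℝ) else 0) := by
        have e1 := KS.E_sub (fun _ => (1:ℝ)) (fun x => if KS.F a x ≤ ar then (1:ℝ) else 0)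
        rw [KS.E_const] at e1
        rw [← e1]
        congr 1; ext x
        by_cases h : ar < KS.F a x
        · simp [h, not_le.2 h]
        · simp [h, not_lt.1 h]
      rw [e]
      linarith
    have hlow := KS.lower hd ha hEP (fun x => rfl) hr' hE hs0 hVs
    have har : 0 < ar := by
      by_contra h
      push Not at h
      have : 4 * 8 ^ d * ar ≤ 0 := mul_nonpos_of_nonneg_of_nonpos (by positivity) h
      linarith
    rcases le_or_gt ar1 ar with hle | hlt
    · refine hle.trans (le_mul_of_one_le_right har.le ?_)
      have : 0 ≤ (10000:ℝ) ^ d * (r / (d : ℝ) + 1) ^ ((d : ℝ) / 2 - 1) := by positivity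
      linarith
    · have hinc := KS.increment hd ha (δ := ar1 - ar) (fun x => rfl) hr' hE hs0 hVs (by linarith)
        (by
          rw [add_sub_cancel]
          exact h2a)
      have := KS.final_num hd hr' hs0 hlow hinc
      linarith
end

section
/- Let n ≥ 1, d ≥ 1, let P be a polynomial of degree at most d on {-1,1}^n, and let X be uniformly distributed on {-1,1}^n. Then for every real q ≥ 3, (E|P(X)|^q)^{1/q} ≤ √2 · q^{d/2} · (E|P(X)|^2)^{1/2}. -/
open Classical

lemma aux_log (p y : ℝ) (hp : 1 ≤ p) (hy : 0 ≤ y) (hpy : p * y < 1) :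
    p * (Real.log (1 + y) - Real.log (1 - y)) ≤
      Real.log (1 + p * y) - Real.log (1 - p * y) := by
  have hy1 : y < 1 := by nlinarith
  have h1 := (Real.hasSum_log_sub_log_of_abs_lt_one (x := y) (by rw [abs_of_nonneg hy]; exact hy1)).mul_left p
  have h2 := Real.hasSum_log_sub_log_of_abs_lt_one (x := p * y)
    (by rw [abs_of_nonneg (by positivity)]; exact hpy)
  refine hasSum_le (fun k => ?_) h1 h2
  have h3 : p ≤ p ^ (2 * k + 1) := le_self_pow₀ hp (by omega)
  rw [mul_pow]
  have : 0 ≤ (2 : ℝ) * (1 / (2 * k + 1)) * y ^ (2 * k + 1) := by positivity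
  nlinarith [mul_le_mul_of_nonneg_right h3 this]

lemma aux_pow (p y : ℝ) (hp : 1 ≤ p) (hy : 0 ≤ y) (hy1 : y < 1) :
    (1 + y) ^ p * (1 - p * y) ≤ (1 - y) ^ p * (1 + p * y) := by
  have hA : 0 < (1 + y) ^ p := Real.rpow_pos_of_pos (by linarith) _
  have hB : 0 < (1 - y) ^ p := Real.rpow_pos_of_pos (by linarith) _
  have hpy0 : 0 ≤ p * y := by positivity
  rcases lt_or_ge (p * y) 1 with h | h
  · have h0 := aux_log p y hp hy h
    have e1 : 0 < 1 - p * y := by linarith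
    have e2 : 0 < 1 + p * y := by linarith
    rw [← Real.log_le_log_iff (by positivity) (by positivity), Real.log_mul hA.ne' e1.ne',
      Real.log_mul hB.ne' e2.ne', Real.log_rpow (by linarith), Real.log_rpow (by linarith)]
    linarith
  · have : (1 + y) ^ p * (1 - p * y) ≤ 0 := mul_nonpos_of_nonneg_of_nonpos hA.le (by linarith)
    have : 0 ≤ (1 - y) ^ p * (1 + p * y) := by positivity
    linarith

lemma aux_one (q y : ℝ) (hq : 2 ≤ q) (hy : 0 ≤ y) (hy1 : y ≤ 1) :
    ((1 + y) ^ q + (1 - y) ^ q) / 2 ≤ (1 + (q - 1) * y ^ 2) ^ (q / 2) := by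
  have hF : ∀ z : ℝ, 0 < 1 + (q - 1) * z ^ 2 := fun z => by nlinarith [sq_nonneg z]
  have key : AntitoneOn (fun z : ℝ => ((1 + z) ^ q + (1 - z) ^ q) *
      (1 + (q - 1) * z ^ 2) ^ (-(q / 2))) (Set.Icc 0 1) := by
    have hder : ∀ z : ℝ, z ∈ Set.Ioo (0 : ℝ) 1 → HasDerivAt (fun z : ℝ => ((1 + z) ^ q + (1 - z) ^ q) *
      (1 + (q - 1) * z ^ 2) ^ (-(q / 2)))
        ((1 * q * (1 + z) ^ (q - 1) + (-1) * q * (1 - z) ^ (q - 1)) *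
          (1 + (q - 1) * z ^ 2) ^ (-(q / 2)) + ((1 + z) ^ q + (1 - z) ^ q) *
          ((q - 1) * (2 * z) * (-(q / 2)) * (1 + (q - 1) * z ^ 2) ^ (-(q / 2) - 1))) z := by
      intro z hz
      have a1 : HasDerivAt (fun z : ℝ => 1 + z) 1 z := (hasDerivAt_id z).const_add 1
      have a2 : HasDerivAt (fun z : ℝ => 1 - z) (-1) z := (hasDerivAt_id z).const_sub 1
      have a3 : HasDerivAt (fun z : ℝ => 1 + (q - 1) * z ^ 2) ((q - 1) * (2 * z)) z := by
        simpa using ((hasDerivAt_pow 2 z).const_mul (q - 1)).const_add 1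
      exact ((a1.rpow_const (p := q) (Or.inr (by linarith))).add
        (a2.rpow_const (p := q) (Or.inr (by linarith)))).mul
        (a3.rpow_const (p := -(q / 2)) (Or.inl (hF z).ne'))
    refine antitoneOn_of_deriv_nonpos (convex_Icc 0 1) ?_ ?_ ?_
    · refine ContinuousOn.mul (ContinuousOn.add ?_ ?_) ?_
      · exact ContinuousOn.rpow_const (by fun_prop) (fun z _ => Or.inr (by linarith))
      · exact ContinuousOn.rpow_const (by fun_prop) (fun z _ => Or.inr (by linarith))
      · exact ContinuousOn.rpow_const (by fun_prop) (fun z _ => Or.inl (hF z).ne')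
    · rw [interior_Icc]
      exact fun z hz => (hder z hz).differentiableAt.differentiableWithinAt
    · rw [interior_Icc]
      intro z hz
      rw [(hder z hz).deriv]
      obtain ⟨hz0, hz1⟩ := hz
      have b1 : (1 + z) ^ q = (1 + z) ^ (q - 1) * (1 + z) := by
        rw [← Real.rpow_add_one (by linarith)]; ring_nf
      have b2 : (1 - z) ^ q = (1 - z) ^ (q - 1) * (1 - z) := by
        rw [← Real.rpow_add_one (by linarith)]; ring_nf
      have b3 : (1 + (q - 1) * z ^ 2) ^ (-(q / 2)) =
          (1 + (q - 1) * z ^ 2) ^ (-(q / 2) - 1) * (1 + (q - 1) * z ^ 2) := by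
        rw [← Real.rpow_add_one (hF z).ne']; ring_nf
      have hk := aux_pow (q - 1) z (by linarith) hz0.le hz1
      rw [b1, b2, b3]
      have hG : 0 < (1 + (q - 1) * z ^ 2) ^ (-(q / 2) - 1) := Real.rpow_pos_of_pos (hF z) _
      generalize (1 + (q - 1) * z ^ 2) ^ (-(q / 2) - 1) = G at *
      generalize (1 + z) ^ (q - 1) = A at *
      generalize (1 - z) ^ (q - 1) = B at *
      have : 0 ≤ q * G * (B * (1 + (q - 1) * z) - A * (1 - (q - 1) * z)) :=
        mul_nonneg (by positivity) (by linarith)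
      nlinarith
  have h := key (Set.left_mem_Icc.2 zero_le_one) ⟨hy, hy1⟩ hy
  simp only [add_zero, sub_zero, Real.one_rpow, ne_eq, OfNat.ofNat_ne_zero, not_false_eq_true,
    zero_pow, mul_zero, mul_one] at h
  rw [Real.rpow_neg (hF y).le, ← div_eq_mul_inv, div_le_iff₀ (Real.rpow_pos_of_pos (hF y) _)] at h
  linarith

lemma aux_two_nonneg (q a b : ℝ) (hq : 2 ≤ q) (hb : 0 ≤ b) (hba : b ≤ a) :
    ((a + b) ^ q + (a - b) ^ q) / 2 ≤ (a ^ 2 + (q - 1) * b ^ 2) ^ (q / 2) := by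
  rcases (hb.trans hba).eq_or_lt with h | ha
  · have : b = 0 := by linarith
    subst this; subst h
    simp [Real.zero_rpow (by linarith : q ≠ 0), Real.zero_rpow (by linarith : q / 2 ≠ 0)]
  · have h := aux_one q (b / a) hq (by positivity) ((div_le_one ha).2 hba)
    have hy1 : b / a ≤ 1 := (div_le_one ha).2 hba
    have hy0 : 0 ≤ b / a := by positivity
    have e1 : a + b = a * (1 + b / a) := by field_simp
    have e2 : a - b = a * (1 - b / a) := by field_simp
    have e3 : a ^ 2 + (q - 1) * b ^ 2 = a ^ 2 * (1 + (q - 1) * (b / a) ^ 2) := by field_simp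
    have e4 : (a ^ 2) ^ (q / 2) = a ^ q := by
      rw [← Real.rpow_natCast, ← Real.rpow_mul ha.le]; congr 1; push_cast; ring
    rw [e1, e2, e3, Real.mul_rpow ha.le (by linarith), Real.mul_rpow ha.le (by linarith),
      Real.mul_rpow (by positivity) (by nlinarith [sq_nonneg (b / a)]), e4]
    have : 0 < a ^ q := Real.rpow_pos_of_pos ha _
    nlinarith

lemma aux_two (q a b : ℝ) (hq : 2 ≤ q) :
    (|a + b| ^ q + |a - b| ^ q) / 2 ≤ (a ^ 2 + (q - 1) * b ^ 2) ^ (q / 2) := by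
  have comb : |a + b| ^ q + |a - b| ^ q = (|a| + |b|) ^ q + |(|a| - |b|)| ^ q := by
    rcases abs_cases a with ⟨h1, _⟩ | ⟨h1, _⟩ <;> rcases abs_cases b with ⟨h2, _⟩ | ⟨h2, _⟩ <;>
      rw [h1, h2]
    · rw [abs_of_nonneg (by linarith : 0 ≤ a + b)]
    · rw [abs_of_nonneg (by linarith : 0 ≤ a - b), add_comm]; ring_nf
    · rw [abs_of_nonpos (by linarith : a - b ≤ 0), ← abs_neg (a + b), add_comm]; ring_nf
    · rw [abs_of_nonpos (by linarith : a + b ≤ 0), ← abs_neg (a - b)]; ring_nf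
  rw [comb, ← sq_abs a, ← sq_abs b]
  have ha := abs_nonneg a
  have hb := abs_nonneg b
  generalize |a| = a at *
  generalize |b| = b at *
  rcases le_total b a with h | h
  · rw [abs_of_nonneg (by linarith)]
    exact aux_two_nonneg q a b hq hb h
  · rw [abs_of_nonpos (by linarith), neg_sub, add_comm a b]
    refine (aux_two_nonneg q b a hq ha h).trans ?_
    refine Real.rpow_le_rpow ?_ ?_ (by linarith)
    · nlinarith [sq_nonneg a, sq_nonneg b]
    · nlinarith [mul_nonneg (by linarith : 0 ≤ q - 2) (by nlinarith : 0 ≤ b ^ 2 - a ^ 2)]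

def flipAt {n : ℕ} (i : Fin n) : Equiv.Perm (Fin n → Bool) :=
  Function.Involutive.toPerm (fun x => Function.update x i (!x i)) (by
    intro x; funext j; by_cases h : j = i
    · subst h; simp
    · simp [h])

lemma flipAt_same {n : ℕ} (i : Fin n) (x : Fin n → Bool) : flipAt i x i = !x i :=
  Function.update_self i _ x

lemma flipAt_ne {n : ℕ} (i j : Fin n) (h : j ≠ i) (x : Fin n → Bool) : flipAt i x j = x j :=
  Function.update_of_ne h _ x

lemma cubeE_flip {n : ℕ} (i : Fin n) (f : (Fin n → Bool) → ℝ) :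
    cubeE n f = cubeE n (fun x => (f x + f (flipAt i x)) / 2) := by
  unfold cubeE
  rw [← Finset.sum_div, Finset.sum_add_distrib, Equiv.sum_comp (flipAt i) f]
  ring

lemma cubeE_mono {n : ℕ} {f g : (Fin n → Bool) → ℝ} (h : ∀ x, f x ≤ g x) :
    cubeE n f ≤ cubeE n g := by
  unfold cubeE
  gcongr
  exact h _

lemma cubeE_nonneg {n : ℕ} {f : (Fin n → Bool) → ℝ} (h : ∀ x, 0 ≤ f x) :
    0 ≤ cubeE n f := div_nonneg (Finset.sum_nonneg fun x _ => h x) (by positivity)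

lemma cubeE_mink {n : ℕ} (r : ℝ) (hr : 1 ≤ r) {f g : (Fin n → Bool) → ℝ} (hf : ∀ x, 0 ≤ f x)
    (hg : ∀ x, 0 ≤ g x) :
    (cubeE n fun x => (f x + g x) ^ r) ^ (1 / r) ≤
      (cubeE n fun x => f x ^ r) ^ (1 / r) + (cubeE n fun x => g x ^ r) ^ (1 / r) := by
  have h := Real.Lp_add_le_of_nonneg Finset.univ hr (fun x _ => hf x) (fun x _ => hg x)
  unfold cubeE
  rw [Real.div_rpow (Finset.sum_nonneg fun x _ => Real.rpow_nonneg (add_nonneg (hf x) (hg x)) _) (by positivity),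
    Real.div_rpow (Finset.sum_nonneg fun x _ => Real.rpow_nonneg (hf x) _) (by positivity),
    Real.div_rpow (Finset.sum_nonneg fun x _ => Real.rpow_nonneg (hg x) _) (by positivity), ← add_div]
  gcongr

/-- Partial Walsh sum. -/
noncomputable def walsh {n : ℕ} (T : Finset (Fin n)) (a : Finset (Fin n) → ℝ)
    (x : Fin n → Bool) : ℝ := ∑ S ∈ T.powerset, a S * ∏ i ∈ S, cubeSign (x i)

lemma walsh_insert {n : ℕ} (T : Finset (Fin n)) (i : Fin n) (hi : i ∉ T)
    (a : Finset (Fin n) → ℝ) (x : Fin n → Bool) :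
    walsh (insert i T) a x = walsh T a x +
      cubeSign (x i) * walsh T (fun S => a (insert i S)) x := by
  unfold walsh
  rw [Finset.sum_powerset_insert hi, Finset.mul_sum]
  congr 1
  refine Finset.sum_congr rfl fun S hS => ?_
  rw [Finset.prod_insert (fun h => hi (Finset.mem_powerset.1 hS h))]
  ring

lemma walsh_flip {n : ℕ} (T : Finset (Fin n)) (i : Fin n) (hi : i ∉ T)
    (a : Finset (Fin n) → ℝ) (x : Fin n → Bool) :
    walsh T a (flipAt i x) = walsh T a x := by
  unfold walsh
  refine Finset.sum_congr rfl fun S hS => ?_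
  congr 1
  refine Finset.prod_congr rfl fun j hj => ?_
  rw [flipAt_ne]
  rintro rfl
  exact hi (Finset.mem_powerset.1 hS hj)

lemma cubeSign_not (b : Bool) : cubeSign (!b) = - cubeSign b := by
  cases b <;> simp [cubeSign]

lemma cubeSign_sq (b : Bool) : cubeSign b ^ 2 = 1 := by
  cases b <;> simp [cubeSign]

lemma parseval {n : ℕ} (T : Finset (Fin n)) : ∀ a : Finset (Fin n) → ℝ,
    (cubeE n fun x => walsh T a x ^ 2) = ∑ S ∈ T.powerset, a S ^ 2 := by
  induction T using Finset.induction_on with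
  | empty => intro a; simp [walsh, cubeE]
  | insert i T hi ih =>
    intro a
    rw [cubeE_flip i, Finset.sum_powerset_insert hi, ← ih, ← ih]
    unfold cubeE
    rw [← add_div, ← Finset.sum_add_distrib]
    congr 1
    refine Finset.sum_congr rfl fun x _ => ?_
    beta_reduce
    rw [walsh_insert T i hi, walsh_insert T i hi, walsh_flip T i hi, walsh_flip T i hi,
      flipAt_same, cubeSign_not]
    linear_combination (walsh T (fun S => a (insert i S)) x) ^ 2 * cubeSign_sq (x i)

lemma hyper_s4 {n : ℕ} (q : ℝ) (hq : 2 ≤ q) (T : Finset (Fin n)) : ∀ a : Finset (Fin n) → ℝ,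
    (cubeE n fun x => (walsh T a x ^ 2) ^ (q / 2)) ^ (1 / (q / 2)) ≤
      ∑ S ∈ T.powerset, (q - 1) ^ S.card * a S ^ 2 := by
  have hr : 1 ≤ q / 2 := by linarith
  have hr0 : q / 2 ≠ 0 := by linarith
  induction T using Finset.induction_on with
  | empty =>
    intro a
    simp only [walsh, cubeE, Finset.powerset_empty, Finset.sum_singleton, Finset.prod_empty,
      mul_one, Finset.sum_const, Finset.card_univ, Fintype.card_fun, Fintype.card_bool,
      Fintype.card_fin, nsmul_eq_mul, Finset.card_empty, pow_zero, one_mul]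
    push_cast
    rw [mul_div_cancel_left₀ _ (by positivity), one_div, Real.rpow_rpow_inv (by positivity) hr0]
  | insert i T hi ih =>
    intro a
    set b : Finset (Fin n) → ℝ := fun S => a (insert i S) with hb
    have hq1 : 0 ≤ q - 1 := by linarith
    have step : (cubeE n fun x => (walsh (insert i T) a x ^ 2) ^ (q / 2)) ≤
        cubeE n fun x => (walsh T a x ^ 2 + (q - 1) * walsh T b x ^ 2) ^ (q / 2) := by
      rw [cubeE_flip i]
      refine cubeE_mono fun x => ?_
      have e : ∀ t : ℝ, (t ^ 2) ^ (q / 2) = |t| ^ q := fun t => by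
        rw [← sq_abs, ← Real.rpow_natCast, ← Real.rpow_mul (abs_nonneg t)]
        congr 1; push_cast; ring
      rw [e, e, walsh_insert T i hi, walsh_insert T i hi, walsh_flip T i hi, walsh_flip T i hi,
        flipAt_same, cubeSign_not, neg_mul, ← sub_eq_add_neg]
      refine (aux_two q _ _ hq).trans_eq ?_
      rw [mul_pow, cubeSign_sq, one_mul]
    refine (Real.rpow_le_rpow (cubeE_nonneg fun x => by positivity) step (by positivity)).trans ?_
    refine (cubeE_mink (q / 2) hr (fun x => by positivity) (fun x => by positivity)).trans ?_
    rw [Finset.sum_powerset_insert hi]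
    refine add_le_add (ih a) ?_
    have e2 : (cubeE n fun x => ((q - 1) * walsh T b x ^ 2) ^ (q / 2)) =
        (q - 1) ^ (q / 2) * cubeE n fun x => (walsh T b x ^ 2) ^ (q / 2) := by
      unfold cubeE
      rw [← mul_div_assoc, Finset.mul_sum]
      congr 1
      exact Finset.sum_congr rfl fun x _ => Real.mul_rpow hq1 (by positivity)
    rw [e2, Real.mul_rpow (by positivity) (cubeE_nonneg fun x => by positivity)]
    nth_rewrite 1 [one_div]
    rw [Real.rpow_rpow_inv hq1 hr0]
    refine (mul_le_mul_of_nonneg_left (ih b) hq1).trans_eq ?_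
    rw [Finset.mul_sum]
    refine Finset.sum_congr rfl fun S hS => ?_
    rw [Finset.card_insert_of_notMem (fun h => hi (Finset.mem_powerset.1 hS h))]
    simp only [hb]
    ring


/-- Hypercontractive moment bound: `‖P(X)‖_q ≤ √2 q^{d/2} ‖P(X)‖₂` for `q ≥ 3`. -/
theorem moment_bound (n d : ℕ) (hn : 1 ≤ n) (hd : 1 ≤ d)
    (P : (Fin n → Bool) → ℝ) (hP : IsPolyDeg n d P) :
    ∀ q : ℝ, 3 ≤ q →
      (cubeE n fun x => |P x| ^ q) ^ (1 / q) ≤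
        Real.sqrt 2 * q ^ ((d : ℝ) / 2) *
          Real.sqrt (cubeE n fun x => (P x) ^ 2) := by
  obtain ⟨a, ha, hPa⟩ := hP
  intro q hq
  have hW : ∀ x, P x = walsh Finset.univ a x := fun x => by
    rw [hPa, walsh, Finset.powerset_univ]
  have hpar := parseval Finset.univ a
  have hh := hyper_s4 q (by linarith) Finset.univ a
  simp only [← hW] at hpar hh
  have e : ∀ t : ℝ, (t ^ 2) ^ (q / 2) = |t| ^ q := fun t => by
    rw [← sq_abs, ← Real.rpow_natCast, ← Real.rpow_mul (abs_nonneg t)]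
    congr 1; push_cast; ring
  simp only [e] at hh
  set M := cubeE n fun x => |P x| ^ q with hM
  set V := cubeE n fun x => (P x) ^ 2 with hV
  have hM0 : 0 ≤ M := cubeE_nonneg fun x => by positivity
  have hV0 : 0 ≤ V := cubeE_nonneg fun x => by positivity
  have h1 : M ^ (1 / (q / 2)) ≤ q ^ d * V := by
    refine hh.trans ?_
    rw [hpar, Finset.mul_sum]
    refine Finset.sum_le_sum fun S _ => ?_
    rcases lt_or_ge d S.card with h | h
    · simp [ha S h]
    · refine mul_le_mul_of_nonneg_right ?_ (sq_nonneg _)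
      exact (pow_le_pow_right₀ (by linarith) h).trans
        (pow_le_pow_left₀ (by linarith) (by linarith) _)
  have h2 : M ^ (1 / q) = Real.sqrt (M ^ (1 / (q / 2))) := by
    rw [Real.sqrt_eq_rpow, ← Real.rpow_mul hM0]
    congr 1
    field_simp
  have h3 : q ^ ((d : ℝ) / 2) = Real.sqrt (q ^ d) := by
    rw [Real.sqrt_eq_rpow, ← Real.rpow_natCast, ← Real.rpow_mul (by linarith)]
    congr 1
    ring
  rw [h2, h3, mul_assoc, ← Real.sqrt_mul (by positivity)]
  refine (Real.sqrt_le_sqrt h1).trans ?_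
  exact le_mul_of_one_le_left (Real.sqrt_nonneg _) (Real.one_le_sqrt.2 (by norm_num))
end
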